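/- arXiv:2510.22259 — 7 statements merged into one kernel-verified Lean document; each statement's English description precedes it below -/
import Mathlib

section
/- Let s ≥ 4. The extended code of C_{(2,n,5,1)} has length n+1, dimension n − 8s, and minimum distance exactly 6, and it is distance-optimal with respect to the sphere packing bound: every binary linear code of length n+1 and dimension n − 8s has minimum distance at most 6. -/
open Finset

/-- The binary cyclic (BCH-type) code of length `n` over GF(2), consisting of all
words `c` such that `∑ i, c i • β ^ (j * i) = 0` for every `j` in the check set `J`. -/
def BCHCode {F : Type} [Field F] [Algebra (ZMod 2) F] (n : ℕ) (β : F) (J : Finset ℕ) :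
    Submodule (ZMod 2) (Fin n → ZMod 2) where
  carrier := {c | ∀ j ∈ J, ∑ i : Fin n, c i • β ^ (j * (i : ℕ)) = 0}
  add_mem' := by
    intro a b ha hb j hj
    simp only [Set.mem_setOf_eq, Pi.add_apply, add_smul, Finset.sum_add_distrib] at *
    rw [ha j hj, hb j hj, add_zero]
  zero_mem' := by
    intro j hj
    simp
  smul_mem' := by
    intro r c hc j hj
    simp only [Set.mem_setOf_eq, Pi.smul_apply, smul_assoc, ← Finset.smul_sum] at *
    rw [hc j hj, smul_zero]

/-- The (Euclidean) dual of a binary linear code. -/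
def dualCode {N : ℕ} (C : Submodule (ZMod 2) (Fin N → ZMod 2)) :
    Submodule (ZMod 2) (Fin N → ZMod 2) where
  carrier := {b | ∀ c ∈ C, ∑ i, b i * c i = 0}
  add_mem' := by
    intro a b ha hb c hc
    simp only [Set.mem_setOf_eq, Pi.add_apply, add_mul, Finset.sum_add_distrib] at *
    rw [ha c hc, hb c hc, add_zero]
  zero_mem' := by
    intro c hc
    simp
  smul_mem' := by
    intro r b hb c hc
    simp only [Set.mem_setOf_eq, Pi.smul_apply, smul_eq_mul, mul_assoc, ← Finset.mul_sum] at *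
    rw [hb c hc, mul_zero]

/-- The linear map appending an overall parity-check coordinate. -/
def extendMap (N : ℕ) : (Fin N → ZMod 2) →ₗ[ZMod 2] (Fin (N + 1) → ZMod 2) where
  toFun c := fun j => if h : (j : ℕ) < N then c ⟨j, h⟩ else ∑ i, c i
  map_add' a b := by
    funext j
    by_cases h : (j : ℕ) < N <;> simp [h, Finset.sum_add_distrib]
  map_smul' r c := by
    funext j
    by_cases h : (j : ℕ) < N <;> simp [h, Finset.mul_sum]

/-- The extended code of a binary linear code. -/
def extendedCode {N : ℕ} (C : Submodule (ZMod 2) (Fin N → ZMod 2)) :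
    Submodule (ZMod 2) (Fin (N + 1) → ZMod 2) :=
  C.map (extendMap N)

/-- The minimum distance (= minimum nonzero Hamming weight) of a binary linear code. -/
noncomputable def minDist {N : ℕ} (C : Submodule (ZMod 2) (Fin N → ZMod 2)) : ℕ :=
  sInf {w | ∃ c ∈ C, c ≠ 0 ∧ hammingNorm c = w}

/-- The number of codewords of Hamming weight `w` in a binary linear code. -/
noncomputable def weightCount {N : ℕ} (C : Submodule (ZMod 2) (Fin N → ZMod 2)) (w : ℕ) : ℕ :=
  Set.ncard {c : Fin N → ZMod 2 | c ∈ C ∧ hammingNorm c = w}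

/-- The 2-cyclotomic coset of `i` modulo `n`. -/
def cycCoset (n i : ℕ) : Set ℕ := {x | ∃ j : ℕ, x = i * 2 ^ j % n}

/-- The coset leader (smallest element) of the 2-cyclotomic coset of `i` modulo `n`. -/
noncomputable def cosetLeader (n i : ℕ) : ℕ := sInf (cycCoset n i)

theorem aux_n_big (s : ℕ) (hs : 4 ≤ s) (n : ℕ) (hn : n = (2 ^ (2 * s) + 1) * (2 ^ s - 1)) :
    8 * s < n ∧ 2 * 2 ^ (8 * s) < (n + 1).choose 3 := by
  obtain ⟨r, hr⟩ : ∃ r, 2 ^ s = r + 1 := ⟨2 ^ s - 1, by have := Nat.one_le_two_pow (n := s); omega⟩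
  have h16 : 2 ^ 4 ≤ 2 ^ s := Nat.pow_le_pow_right (by norm_num) hs
  have hlt : s < 2 ^ s := Nat.lt_two_pow_self
  have e2 : 2 ^ (2 * s) = (r + 1) ^ 2 := by rw [mul_comm, pow_mul, hr]
  have e8 : 2 ^ (8 * s) = (r + 1) ^ 8 := by rw [mul_comm, pow_mul, hr]
  rw [e2, hr] at hn
  rw [e8]
  rw [hr] at h16 hlt
  simp only [Nat.add_sub_cancel] at hn
  have hr15 : 15 ≤ r := by omega
  have hnn : (r + 1) ^ 2 * r + 2 ≤ n := by rw [hn]; nlinarith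
  constructor
  · nlinarith
  · have hc := Nat.add_one_mul_choose_eq n 2
    have hc2 := Nat.choose_two_right n
    have hc3 := Nat.even_mul_pred_self n
    have hd : n.choose 2 * 2 = n * (n - 1) := by
      rw [hc2]; exact Nat.div_mul_cancel hc3.two_dvd
    obtain ⟨m, rfl⟩ : ∃ m, n = m + 1 := ⟨n - 1, by omega⟩
    simp only [Nat.succ_eq_add_one, Nat.add_sub_cancel] at hc hd
    set A := (r + 1) ^ 2 * r with hA
    have h6 : (m + 1 + 1).choose 3 * 6 = (m + 2) * ((m + 1) * m) := by
      rw [← hd]; nlinarith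
    have hAm : A ≤ m := by omega
    have hA3 : A * (A * A) ≤ (m + 2) * ((m + 1) * m) := by
      apply Nat.mul_le_mul (by omega)
      exact Nat.mul_le_mul (by omega) hAm
    have hkey : 12 * (r + 1) ^ 2 < r ^ 3 := by
      obtain ⟨k, rfl⟩ := Nat.exists_eq_add_of_le hr15
      ring_nf
      nlinarith [Nat.zero_le k, Nat.zero_le (k ^ 2), Nat.zero_le (k ^ 3)]
    have hA3' : 12 * (r + 1) ^ 8 < A * (A * A) := by
      calc 12 * (r + 1) ^ 8 = (r + 1) ^ 6 * (12 * (r + 1) ^ 2) := by ring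
        _ < (r + 1) ^ 6 * r ^ 3 := Nat.mul_lt_mul_of_pos_left hkey (by positivity)
        _ = A * (A * A) := by rw [hA]; ring
    omega

theorem aux_sphere (N k : ℕ) (hN : 2 ^ k < N.choose 3) (D : Submodule (ZMod 2) (Fin N → ZMod 2))
    (hD : Module.finrank (ZMod 2) D + k = N) : minDist D ≤ 6 := by
  classical
  let f : Finset (Fin N) → ((Fin N → ZMod 2) ⧸ D) :=
    fun S => D.mkQ (fun i => if i ∈ S then 1 else 0)
  have hcard : Nat.card ((Fin N → ZMod 2) ⧸ D) = 2 ^ k := by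
    rw [Module.natCard_eq_pow_finrank (K := ZMod 2)]
    have h1 := Submodule.finrank_quotient_add_finrank D
    simp only [Module.finrank_fintype_fun_eq_card, Fintype.card_fin] at h1
    have h2 : Module.finrank (ZMod 2) ((Fin N → ZMod 2) ⧸ D) = k := by omega
    rw [h2]; simp
  have : Finite ((Fin N → ZMod 2) ⧸ D) := Module.finite_of_finite (ZMod 2)
  have : Fintype ((Fin N → ZMod 2) ⧸ D) := Fintype.ofFinite _
  have hlt : (Finset.univ : Finset ((Fin N → ZMod 2) ⧸ D)).card <
      (Finset.powersetCard 3 (Finset.univ : Finset (Fin N))).card := by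
    rw [Finset.card_powersetCard, Finset.card_univ, ← Nat.card_eq_fintype_card, hcard]
    simpa using hN
  obtain ⟨S, hS, T, hT, hne, heq⟩ := Finset.exists_ne_map_eq_of_card_lt_of_maps_to hlt
    (f := f) (fun _ _ => by simp)
  rw [Finset.mem_powersetCard] at hS hT
  simp only [f, Submodule.mkQ_apply] at heq
  rw [Submodule.Quotient.eq] at heq
  refine le_trans (Nat.sInf_le ⟨_, heq, ?_, rfl⟩) ?_
  · intro h0
    apply hne
    ext i
    have := congrFun h0 i
    by_cases h1 : i ∈ S <;> by_cases h2 : i ∈ T <;> simp_all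
  · unfold hammingNorm
    calc _ ≤ (S ∪ T).card := by
          apply Finset.card_le_card
          intro i
          simp only [Finset.mem_filter, Finset.mem_union]
          by_cases h1 : i ∈ S <;> by_cases h2 : i ∈ T <;> simp_all
      _ ≤ S.card + T.card := Finset.card_union_le _ _
      _ = 6 := by omega

theorem aux_two_pow (t : ℕ) (ht : 0 < t) (d : ℕ) :
    ∃ j < t, ((2 : ZMod (2 ^ t + 1)) ^ d = 2 ^ j ∨ (2 : ZMod (2 ^ t + 1)) ^ d = - 2 ^ j) := by
  have h0 : (2 : ZMod (2 ^ t + 1)) ^ t = -1 := by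
    have := ZMod.natCast_self (2 ^ t + 1)
    push_cast at this
    exact eq_neg_of_add_eq_zero_left this
  refine ⟨d % t, Nat.mod_lt _ ht, ?_⟩
  have : (2 : ZMod (2 ^ t + 1)) ^ d = (-1) ^ (d / t) * 2 ^ (d % t) := by
    rw [← h0, ← pow_mul, ← pow_add, Nat.div_add_mod]
  rw [this]
  rcases neg_one_pow_eq_or (ZMod (2 ^ t + 1)) (d / t) with h | h <;> simp [h]

theorem aux_two_pow_one (t : ℕ) (ht : 8 ≤ t) (d : ℕ) (hd : d < 2 * t)
    (h : (2 : ZMod (2 ^ t + 1)) ^ d = 1) : d = 0 := by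
  have h0 : (2 : ZMod (2 ^ t + 1)) ^ t = -1 := by
    have := ZMod.natCast_self (2 ^ t + 1)
    push_cast at this
    exact eq_neg_of_add_eq_zero_left this
  by_cases hdt : d < t
  · have h1 : ((2 ^ d : ℕ) : ZMod (2 ^ t + 1)) = (1 : ℕ) := by push_cast; exact h
    rw [ZMod.natCast_eq_natCast_iff'] at h1
    have hp : 2 ^ d < 2 ^ t := Nat.pow_lt_pow_right (by norm_num) hdt
    rw [Nat.mod_eq_of_lt (by omega), Nat.mod_eq_of_lt (by omega)] at h1
    simpa using h1
  · obtain ⟨j, rfl⟩ := Nat.exists_eq_add_of_le (not_lt.mp hdt)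
    rw [pow_add, h0] at h
    have h1 : ((2 ^ j + 1 : ℕ) : ZMod (2 ^ t + 1)) = 0 := by
      push_cast; linear_combination -h
    rw [ZMod.natCast_eq_zero_iff] at h1
    have hp : 2 ^ j < 2 ^ t := Nat.pow_lt_pow_right (by norm_num) (by omega)
    have := Nat.le_of_dvd (Nat.succ_pos _) h1
    omega

theorem aux_two_pow_three (t : ℕ) (ht : 8 ≤ t) (d : ℕ) :
    (2 : ZMod (2 ^ t + 1)) ^ d ≠ 3 := by
  intro h
  have h8 : 2 ^ 8 ≤ 2 ^ t := Nat.pow_le_pow_right (by norm_num) ht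
  obtain ⟨j, hj, h1 | h1⟩ := aux_two_pow t (by omega) d
  · have h2 : ((2 ^ j : ℕ) : ZMod (2 ^ t + 1)) = (3 : ℕ) := by push_cast; rw [← h1, h]
    rw [ZMod.natCast_eq_natCast_iff'] at h2
    have hp : 2 ^ j < 2 ^ t := Nat.pow_lt_pow_right (by norm_num) hj
    rw [Nat.mod_eq_of_lt (by omega), Nat.mod_eq_of_lt (by omega)] at h2
    rcases j with _ | j
    · simp at h2
    · rw [pow_succ] at h2; omega
  · have h2 : ((2 ^ j + 3 : ℕ) : ZMod (2 ^ t + 1)) = 0 := by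
      push_cast; linear_combination h1 - h
    rw [ZMod.natCast_eq_zero_iff] at h2
    have hp : 2 ^ j ≤ 2 ^ (t - 1) := Nat.pow_le_pow_right (by norm_num) (by omega)
    have hp2 : 2 ^ t = 2 * 2 ^ (t - 1) := by rw [← pow_succ']; congr 1; omega
    have := Nat.le_of_dvd (Nat.succ_pos _) h2
    omega

theorem aux_frob {F : Type} [Field F] [Algebra (ZMod 2) F] (f : Polynomial (ZMod 2)) (x : F)
    (h : Polynomial.aeval x f = 0) (k : ℕ) : Polynomial.aeval (x ^ 2 ^ k) f = 0 := by
  induction k with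
  | zero => simpa using h
  | succ k ih =>
    rw [pow_succ, pow_mul, ← Polynomial.expand_aeval, ZMod.expand_card, map_pow, ih]
    simp

theorem aux_poly {F : Type} [Field F] [Algebra (ZMod 2) F] (s : ℕ) (hs : 4 ≤ s) (n : ℕ)
    (hn : 2 ^ (2 * s) + 1 ∣ n) (β : F) (hβ : orderOf β = n) (hn0 : 0 < n)
    (f : Polynomial (ZMod 2)) (hdeg : f.degree < (8 * s : ℕ))
    (h1 : Polynomial.aeval β f = 0) (h3 : Polynomial.aeval (β ^ 3) f = 0) : f = 0 := by
  classical
  by_contra hf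
  have h0 : (2 : ZMod (2 ^ (2 * s) + 1)) ^ (2 * s) = -1 := by
    have := ZMod.natCast_self (2 ^ (2 * s) + 1)
    push_cast at this
    exact eq_neg_of_add_eq_zero_left this
  have h4 : (2 : ZMod (2 ^ (2 * s) + 1)) ^ (4 * s) = 1 := by
    rw [show 4 * s = 2 * s + 2 * s by ring, pow_add, h0]; norm_num
  have hu : ∀ k, IsUnit ((2 : ZMod (2 ^ (2 * s) + 1)) ^ k) := by
    intro k
    apply IsUnit.pow
    exact IsUnit.of_pow_eq_one h4 (by omega)
  have hu3 : IsUnit (3 : ZMod (2 ^ (2 * s) + 1)) := by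
    have : ((3 : ℕ) : ZMod (2 ^ (2 * s) + 1)) = 3 := by norm_num
    rw [← this, ZMod.isUnit_iff_coprime]
    rw [Nat.Prime.coprime_iff_not_dvd Nat.prime_three, pow_mul, Nat.dvd_iff_mod_eq_zero,
      Nat.add_mod, Nat.pow_mod]
    simp
  have hpow : ∀ a b : ℕ, β ^ a = β ^ b → (a : ZMod (2 ^ (2 * s) + 1)) = b := by
    intro a b hab
    have hfin : IsOfFinOrder β := orderOf_pos_iff.mp (by omega)
    rw [hfin.pow_eq_pow_iff_modEq, hβ] at hab
    exact (ZMod.natCast_eq_natCast_iff _ _ _).mpr (hab.of_dvd hn)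
  have hinj : ∀ k < 4 * s, ∀ l < 4 * s, k ≤ l →
      (2 : ZMod (2 ^ (2 * s) + 1)) ^ k = 2 ^ l → k = l := by
    intro k hk l hl hkl h
    obtain ⟨d, rfl⟩ := Nat.exists_eq_add_of_le hkl
    rw [pow_add] at h
    have := (hu k).mul_left_cancel ((mul_one _).trans h)
    have := aux_two_pow_one (2 * s) (by omega) d (by omega) this.symm
    omega
  have hinj' : ∀ k < 4 * s, ∀ l < 4 * s,
      (2 : ZMod (2 ^ (2 * s) + 1)) ^ k = 2 ^ l → k = l := by
    intro k hk l hl h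
    rcases le_total k l with hkl | hkl
    · exact hinj k hk l hl hkl h
    · exact (hinj l hl k hk hkl h.symm).symm
  let A := (Finset.range (4 * s)).image (fun k => β ^ 2 ^ k)
  let B := (Finset.range (4 * s)).image (fun k => (β ^ 3) ^ 2 ^ k)
  have hA : A.card = 4 * s := by
    rw [Finset.card_image_of_injOn, Finset.card_range]
    intro k hk l hl h
    simp only [Finset.coe_range, Set.mem_Iio] at hk hl
    have := hpow _ _ h
    push_cast at this
    exact hinj' k hk l hl this
  have hB : B.card = 4 * s := by
    rw [Finset.card_image_of_injOn, Finset.card_range]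
    intro k hk l hl h
    simp only [Finset.coe_range, Set.mem_Iio] at hk hl
    simp only [← pow_mul] at h
    have := hpow _ _ h
    push_cast at this
    exact hinj' k hk l hl (hu3.mul_left_cancel this)
  have hAB : Disjoint A B := by
    rw [Finset.disjoint_left]
    intro x hx hx'
    simp only [A, B, Finset.mem_image, Finset.mem_range] at hx hx'
    obtain ⟨k, hk, rfl⟩ := hx
    obtain ⟨l, hl, h⟩ := hx'
    rw [← pow_mul] at h
    have := hpow _ _ h
    push_cast at this
    apply aux_two_pow_three (2 * s) (by omega) (k + (4 * s - l))
    rw [pow_add, ← this, mul_assoc, ← pow_add, Nat.add_sub_cancel' hl.le, h4, mul_one]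
  have hsub : A ∪ B ⊆ (f.map (algebraMap (ZMod 2) F)).roots.toFinset := by
    intro x hx
    rw [Multiset.mem_toFinset, Polynomial.mem_roots
      ((Polynomial.map_ne_zero_iff (algebraMap (ZMod 2) F).injective).mpr hf), Polynomial.IsRoot.def,
      Polynomial.eval_map_algebraMap]
    simp only [A, B, Finset.mem_image, Finset.mem_range, Finset.mem_union] at hx
    rcases hx with ⟨k, -, rfl⟩ | ⟨k, -, rfl⟩
    · exact aux_frob f β h1 k
    · exact aux_frob f _ h3 k
  have hc := Finset.card_le_card hsub
  rw [Finset.card_union_of_disjoint hAB, hA, hB] at hc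
  have h5 := Multiset.toFinset_card_le (f.map (algebraMap (ZMod 2) F)).roots
  have h6 := Polynomial.card_roots' (f.map (algebraMap (ZMod 2) F))
  rw [Polynomial.natDegree_map] at h6
  have h7 := (Polynomial.natDegree_lt_iff_degree_lt hf).mpr hdeg
  omega

theorem aux_extend_inj (N : ℕ) : Function.Injective (extendMap N) := by
  intro a b h
  funext i
  have := congrFun h i.castSucc
  simpa [extendMap] using this

theorem aux_dim {F : Type} [Field F] [Algebra (ZMod 2) F] [FiniteDimensional (ZMod 2) F]
    (s : ℕ) (hs : 4 ≤ s) (n : ℕ) (hF : Module.finrank (ZMod 2) F = 4 * s)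
    (hn : 2 ^ (2 * s) + 1 ∣ n) (β : F) (hβ : orderOf β = n) (hn8 : 8 * s < n) :
    Module.finrank (ZMod 2) (BCHCode n β {1, 3}) + 8 * s = n := by
  let L (x : F) : (Fin n → ZMod 2) →ₗ[ZMod 2] F :=
    Fintype.linearCombination (ZMod 2) (fun i : Fin n => x ^ (i : ℕ))
  have hL : ∀ x c, L x c = ∑ i : Fin n, c i • x ^ (i : ℕ) := fun x c => by
    simp [L, Fintype.linearCombination_apply]
  let Φ : (Fin n → ZMod 2) →ₗ[ZMod 2] F × F := (L β).prod (L (β ^ 3))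
  have hker : LinearMap.ker Φ = BCHCode n β {1, 3} := by
    ext c
    simp only [Φ, LinearMap.mem_ker, LinearMap.prod_apply, Function.prod_apply, Prod.mk_eq_zero, hL]
    change _ ↔ ∀ j ∈ ({1, 3} : Finset ℕ), ∑ i : Fin n, c i • β ^ (j * (i : ℕ)) = 0
    simp [pow_mul]
  let Ψ : Polynomial.degreeLT (ZMod 2) (8 * s) →ₗ[ZMod 2] F × F :=
    ((Polynomial.aeval β).toLinearMap.prod (Polynomial.aeval (β ^ 3)).toLinearMap) ∘ₗ
      (Polynomial.degreeLT (ZMod 2) (8 * s)).subtype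
  have hFF : Module.finrank (ZMod 2) (F × F) = 8 * s := by
    rw [Module.finrank_prod, hF]; omega
  have hlt : Module.finrank (ZMod 2) (Polynomial.degreeLT (ZMod 2) (8 * s)) = 8 * s := by
    rw [(Polynomial.degreeLTEquiv (ZMod 2) (8 * s)).finrank_eq]; simp
  have : FiniteDimensional (ZMod 2) (Polynomial.degreeLT (ZMod 2) (8 * s)) :=
    (Polynomial.degreeLTEquiv (ZMod 2) (8 * s)).symm.finiteDimensional
  have hΨ : Function.Injective Ψ := by
    rw [← LinearMap.ker_eq_bot, LinearMap.ker_eq_bot']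
    rintro ⟨f, hf⟩ h
    rw [Polynomial.mem_degreeLT] at hf
    have h' : Polynomial.aeval β f = 0 ∧ Polynomial.aeval (β ^ 3) f = 0 := by
      simpa [Ψ] using h
    apply Subtype.ext
    exact aux_poly s hs n hn β hβ (by omega) f hf h'.1 h'.2
  have hΨs : Function.Surjective Ψ :=
    (LinearMap.injective_iff_surjective_of_finrank_eq_finrank (by rw [hFF, hlt])).mp hΨ
  have hev : ∀ (x : F) (f : Polynomial (ZMod 2)), f.degree < (8 * s : ℕ) →
      L x (fun i => f.coeff i) = Polynomial.aeval x f := by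
    intro x f hf
    have hnd : f.natDegree < n := by
      by_cases h0 : f = 0
      · subst h0; simp; omega
      · have := (Polynomial.natDegree_lt_iff_degree_lt h0).mpr hf
        omega
    rw [hL, Polynomial.aeval_eq_sum_range' hnd,
      Fin.sum_univ_eq_sum_range (fun i => f.coeff i • x ^ i) n]
  have hΦs : Function.Surjective Φ := by
    intro y
    obtain ⟨⟨f, hf⟩, rfl⟩ := hΨs y
    rw [Polynomial.mem_degreeLT] at hf
    refine ⟨fun i => f.coeff i, ?_⟩
    simp only [Φ, LinearMap.prod_apply, Function.prod_apply, hev _ f hf]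
    simp [Ψ]
  have := LinearMap.finrank_range_add_finrank_ker Φ
  rw [LinearMap.range_eq_top.mpr hΦs, finrank_top, hFF, hker] at this
  simp only [Module.finrank_fintype_fun_eq_card, Fintype.card_fin] at this
  omega

theorem aux_weight {F : Type} [Field F] [Algebra (ZMod 2) F] (n : ℕ) (β : F)
    (hβ : orderOf β = n) (c : Fin n → ZMod 2) (hc : c ∈ BCHCode n β {1, 3}) (h0 : c ≠ 0) :
    5 ≤ hammingNorm c := by
  classical
  by_contra hlt
  push Not at hlt
  obtain ⟨i0, hi0⟩ := Function.ne_iff.mp h0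
  have hnpos : 0 < n := i0.pos
  have hβ0 : β ≠ 0 := by
    rintro rfl
    have : orderOf (0 : F) = 0 := orderOf_zero F
    omega
  have : CharP F 2 := charP_of_injective_algebraMap (algebraMap (ZMod 2) F).injective 2
  let S := Finset.univ.filter (fun i => c i ≠ 0)
  have hS : S.card ≤ 4 := by
    have : S.card = hammingNorm c := rfl
    omega
  let P : ℕ → F := fun j => ∑ i : Fin n, c i • (β ^ (i : ℕ)) ^ j
  have hPP : ∀ j, P (2 * j) = P j ^ 2 := by
    intro j
    simp only [P]
    rw [sum_pow_char]
    apply Finset.sum_congr rfl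
    intro i _
    rw [smul_pow]
    congr 1
    · generalize c i = x
      revert x; decide
    · rw [← pow_mul, ← pow_mul, ← pow_mul]; congr 1; ring
  have hP : ∀ j ∈ ({1, 3} : Finset ℕ), P j = 0 := by
    intro j hj
    have := hc j hj
    rw [← this]
    apply Finset.sum_congr rfl
    intro i _
    rw [← pow_mul, mul_comm j]
  have hP1 : P 1 = 0 := hP 1 (by simp)
  have hP3 : P 3 = 0 := hP 3 (by simp)
  have hP2 : P 2 = 0 := by rw [show 2 = 2 * 1 by rfl, hPP, hP1]; simp
  have hP4 : P 4 = 0 := by rw [show 4 = 2 * 2 by rfl, hPP, hP2]; simp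
  let g : Polynomial F := ∏ i ∈ S.erase i0, (Polynomial.X - Polynomial.C (β ^ (i : ℕ)))
  have hgdeg : g.natDegree < 4 := by
    have : g.natDegree = (S.erase i0).card := by
      simp only [g]
      rw [Polynomial.natDegree_finsetProd_X_sub_C_eq_card]
    have h2 : (S.erase i0).card < S.card :=
      Finset.card_erase_lt_of_mem (by simp [S]; exact hi0)
    omega
  have hsum : ∑ i : Fin n, c i • (β ^ (i : ℕ) * g.eval (β ^ (i : ℕ))) = 0 := by
    have : ∑ i : Fin n, c i • (β ^ (i : ℕ) * g.eval (β ^ (i : ℕ))) =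
        ∑ j ∈ Finset.range 4, g.coeff j * P (j + 1) := by
      simp only [P, Finset.mul_sum]
      rw [Finset.sum_comm]
      apply Finset.sum_congr rfl
      intro i _
      rw [Polynomial.eval_eq_sum_range' hgdeg, Finset.mul_sum, Finset.smul_sum]
      apply Finset.sum_congr rfl
      intro j _
      rw [mul_smul_comm]
      congr 1
      ring
    rw [this]
    simp [Finset.sum_range_succ, hP1, hP2, hP3, hP4]
  rw [Finset.sum_eq_single i0] at hsum
  · rw [smul_eq_zero] at hsum
    rcases hsum with h | h
    · exact hi0 h
    · rw [mul_eq_zero] at h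
      rcases h with h | h
      · exact pow_ne_zero _ hβ0 h
      · simp only [g, Polynomial.eval_prod, Finset.prod_eq_zero_iff] at h
        obtain ⟨i, hi, h⟩ := h
        simp only [Polynomial.eval_sub, Polynomial.eval_X, Polynomial.eval_C, sub_eq_zero] at h
        have := pow_injOn_Iio_orderOf (x := β) (by simp [hβ]) (by simp [hβ]) h
        exact (Finset.mem_erase.mp hi).1 (Fin.ext this).symm
  · intro i _ hi
    by_cases hci : c i = 0
    · simp [hci]
    · have : g.eval (β ^ (i : ℕ)) = 0 := by
        simp only [g, Polynomial.eval_prod, Finset.prod_eq_zero_iff]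
        exact ⟨i, by simp [S, hi, hci], by simp⟩
      simp [this]
  · simp

theorem aux_extend_weight (n : ℕ) (c : Fin n → ZMod 2) (h : 5 ≤ hammingNorm c) :
    6 ≤ hammingNorm (extendMap n c) := by
  classical
  have h1 : hammingNorm (extendMap n c) =
      hammingNorm c + if (∑ i, c i) ≠ 0 then 1 else 0 := by
    unfold hammingNorm
    rw [Finset.card_filter, Finset.card_filter, Fin.sum_univ_castSucc]
    simp [extendMap]
  have h2 : ∑ i, c i = (hammingNorm c : ZMod 2) := by
    unfold hammingNorm
    rw [Finset.card_filter]
    push_cast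
    apply Finset.sum_congr rfl
    intro i _
    have hx : ∀ x : ZMod 2, x = 0 ∨ x = 1 := by decide
    rcases hx (c i) with h | h <;> simp [h]
  rw [h1, h2]
  by_cases h5 : hammingNorm c = 5
  · rw [h5]; decide
  · omega

theorem stmt_8 (s : ℕ) (hs : 4 ≤ s) (n : ℕ) (hn : n = (2 ^ (2 * s) + 1) * (2 ^ s - 1))
    (α : GaloisField 2 (4 * s)) (hα : orderOf α = 2 ^ (4 * s) - 1)
    (β : GaloisField 2 (4 * s)) (hβ : β = α ^ (2 ^ s + 1)) :
    Module.finrank (ZMod 2) (extendedCode (BCHCode n β {1, 3})) = n - 8 * s ∧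
    minDist (extendedCode (BCHCode n β {1, 3})) = 6 ∧
    ∀ D : Submodule (ZMod 2) (Fin (n + 1) → ZMod 2),
      Module.finrank (ZMod 2) D = n - 8 * s → minDist D ≤ 6 := by
  obtain ⟨hn8, hch⟩ := aux_n_big s hs n hn
  have hord : orderOf β = n := by
    obtain ⟨r, hr⟩ : ∃ r, 2 ^ s = r + 1 :=
      ⟨2 ^ s - 1, by have := Nat.one_le_two_pow (n := s); omega⟩
    have e2 : 2 ^ (2 * s) = (r + 1) ^ 2 := by rw [mul_comm, pow_mul, hr]
    have e4 : 2 ^ (4 * s) = (r + 1) ^ 4 := by rw [mul_comm, pow_mul, hr]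
    have hmul : 2 ^ (4 * s) - 1 = (2 ^ s + 1) * n := by
      rw [hn, e4, e2, hr, Nat.add_sub_cancel]
      have : (r + 1) ^ 4 = (r + 1 + 1) * (((r + 1) ^ 2 + 1) * r) + 1 := by ring
      omega
    rw [hβ, orderOf_pow_of_dvd (by omega) (by rw [hα, hmul]; exact dvd_mul_right _ _), hα, hmul]
    exact Nat.mul_div_cancel_left _ (by positivity)
  have hdim := aux_dim s hs n (GaloisField.finrank 2 (by omega)) (by rw [hn]; exact dvd_mul_right _ _)
    β hord hn8
  have hext : Module.finrank (ZMod 2) (extendedCode (BCHCode n β {1, 3})) = n - 8 * s := by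
    unfold extendedCode
    rw [← (Submodule.equivMapOfInjective (extendMap n) (aux_extend_inj n) _).finrank_eq]
    omega
  have hopt : ∀ D : Submodule (ZMod 2) (Fin (n + 1) → ZMod 2),
      Module.finrank (ZMod 2) D = n - 8 * s → minDist D ≤ 6 := by
    intro D hD
    exact aux_sphere (n + 1) (8 * s + 1) (by rw [pow_succ']; exact hch) D (by omega)
  refine ⟨hext, le_antisymm (hopt _ hext) ?_, hopt⟩
  have hne : extendedCode (BCHCode n β {1, 3}) ≠ ⊥ := by
    intro h
    rw [h, finrank_bot] at hext
    omega
  obtain ⟨w, hw, hw0⟩ := Submodule.exists_mem_ne_zero_of_ne_bot hne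
  refine le_csInf (s := {w | ∃ c ∈ extendedCode (BCHCode n β {1, 3}), c ≠ 0 ∧ hammingNorm c = w})
    ⟨_, w, hw, hw0, rfl⟩ ?_
  rintro _ ⟨x, hx, hx0, rfl⟩
  obtain ⟨c, hc, rfl⟩ := hx
  apply aux_extend_weight
  apply aux_weight n β hord c hc
  rintro rfl
  simp at hx0
end

section
/- Let s ≥ 2 be an integer such that s is odd or s ≡ 0 (mod 4). Then 5 divides n = (2^{2s}+1)(2^s−1), and the minimum distance of the code C_{(2,n,5,1)} equals exactly 5. -/
open Finset

lemma bch_sum_eq {F : Type} [Field F] [Algebra (ZMod 2) F] {n : ℕ} (c : Fin n → ZMod 2)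
    (f : Fin n → F) : ∑ i, c i • f i = ∑ i ∈ Finset.univ.filter (fun i => c i ≠ 0), f i := by
  rw [Finset.sum_filter]
  refine Finset.sum_congr rfl fun i _ => ?_
  have h : ∀ z : ZMod 2, z = 0 ∨ z = 1 := by decide
  rcases h (c i) with h | h <;> simp [h]

lemma bch_char_two {F : Type} [Field F] [CharP F 2] (x y z : F)
    (h : x ^ 3 + y ^ 3 + z ^ 3 + (x + y + z) ^ 3 = 0) : x = y ∨ x = z ∨ y = z := by
  have h2 : (2 : F) = 0 := CharTwo.two_eq_zero
  have h' : (x + y) * ((x + z) * (y + z)) = 0 := by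
    linear_combination h + (-(x ^ 3 + y ^ 3 + z ^ 3) - x ^ 2 * y - x * y ^ 2 - x ^ 2 * z
      - x * z ^ 2 - y ^ 2 * z - y * z ^ 2 - 2 * x * y * z) * h2
  rcases mul_eq_zero.1 h' with h | h
  · exact Or.inl (CharTwo.add_eq_zero.1 h)
  rcases mul_eq_zero.1 h with h | h
  · exact Or.inr (Or.inl (CharTwo.add_eq_zero.1 h))
  · exact Or.inr (Or.inr (CharTwo.add_eq_zero.1 h))

lemma bch_lower {F : Type} [Field F] [CharP F 2] {ι : Type} [DecidableEq ι] (S : Finset ι)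
    (g : ι → F) (hg : Function.Injective g) (h0 : ∀ i, g i ≠ 0) (hS : S.Nonempty)
    (h1 : ∑ i ∈ S, g i = 0) (h3 : ∑ i ∈ S, g i ^ 3 = 0) : 5 ≤ S.card := by
  by_contra hlt
  have hpos := hS.card_pos
  have hc : S.card = 1 ∨ S.card = 2 ∨ S.card = 3 ∨ S.card = 3 + 1 := by omega
  rcases hc with hc | hc | hc | hc
  · obtain ⟨a, rfl⟩ := Finset.card_eq_one.1 hc
    simp [h0] at h1
  · obtain ⟨a, b, hab, rfl⟩ := Finset.card_eq_two.1 hc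
    rw [Finset.sum_pair hab, CharTwo.add_eq_zero] at h1
    exact hab (hg h1)
  · obtain ⟨a, b, d, hab, had, hbd, rfl⟩ := Finset.card_eq_three.1 hc
    have e1 : g a + g b + g d = 0 := by
      rw [← h1]; simp [hab, had, hbd, add_assoc]
    have e3 : g a ^ 3 + g b ^ 3 + g d ^ 3 = 0 := by
      rw [← h3]; simp [hab, had, hbd, add_assoc]
    rcases bch_char_two (g a) (g b) (g d) (by rw [e1, e3]; simp) with h | h | h
    · exact hab (hg h)
    · exact had (hg h)
    · exact hbd (hg h)
  · obtain ⟨e, T, heT, rfl, hT⟩ := Finset.card_eq_succ.1 hc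
    obtain ⟨a, b, d, hab, had, hbd, rfl⟩ := Finset.card_eq_three.1 hT
    rw [Finset.sum_insert heT] at h1 h3
    have e1 : g a + g b + g d = g e := by
      rw [CharTwo.add_eq_zero.1 h1]; simp [hab, had, hbd, add_assoc]
    have e3 : g a ^ 3 + g b ^ 3 + g d ^ 3 = g e ^ 3 := by
      rw [CharTwo.add_eq_zero.1 h3]; simp [hab, had, hbd, add_assoc]
    rcases bch_char_two (g a) (g b) (g d)
      (by rw [e1, e3]; exact CharTwo.add_self_eq_zero _) with h | h | h
    · exact hab (hg h)
    · exact had (hg h)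
    · exact hbd (hg h)

lemma bch_five_dvd (s : ℕ) (hcase : Odd s ∨ 4 ∣ s) : 5 ∣ (2 ^ (2 * s) + 1) * (2 ^ s - 1) := by
  rcases hcase with ⟨k, rfl⟩ | ⟨k, rfl⟩
  · apply Dvd.dvd.mul_right
    have h : 2 ^ (2 * (2 * k + 1)) = 16 ^ k * 4 := by
      rw [show 2 * (2 * k + 1) = 4 * k + 2 by ring, pow_add, pow_mul]; norm_num
    rw [h]
    have : 16 ^ k % 5 = 1 := by rw [Nat.pow_mod]; simp
    omega
  · apply Dvd.dvd.mul_left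
    rw [pow_mul]
    have : (2 ^ 4) ^ k % 5 = 1 := by rw [Nat.pow_mod]; simp
    omega

lemma bch_mem {F : Type} [Field F] [Algebra (ZMod 2) F] {m : ℕ} (β : F)
    (hβ : orderOf β = 5 * m) (hm : 0 < m) :
    ∃ c ∈ BCHCode (5 * m) β {1, 3}, c ≠ 0 ∧ hammingNorm c = 5 := by
  have hlt : ∀ k : Fin 5, (k : ℕ) * m < 5 * m := fun k => Nat.mul_lt_mul_of_pos_right k.2 hm
  let e : Fin 5 ↪ Fin (5 * m) := ⟨fun k => ⟨k * m, hlt k⟩, fun a b hab => by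
    have := congrArg Fin.val hab
    exact Fin.ext (Nat.eq_of_mul_eq_mul_right hm this)⟩
  let S := Finset.univ.map e
  let c : Fin (5 * m) → ZMod 2 := fun i => if i ∈ S then 1 else 0
  have hfil : Finset.univ.filter (fun i => c i ≠ 0) = S := by
    ext i; simp [c]
  have hnorm : hammingNorm c = 5 := by
    unfold hammingNorm
    rw [hfil]; simp [S]
  have hγ5 : (β ^ m) ^ 5 = 1 := by
    rw [← pow_mul, mul_comm, ← hβ, pow_orderOf_eq_one]
  have hγ1 : β ^ m ≠ 1 := by
    intro h
    have := Nat.le_of_dvd hm (orderOf_dvd_of_pow_eq_one h)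
    omega
  have hsum : 1 + β ^ m + (β ^ m) ^ 2 + (β ^ m) ^ 3 + (β ^ m) ^ 4 = 0 := by
    have : (β ^ m - 1) * (1 + β ^ m + (β ^ m) ^ 2 + (β ^ m) ^ 3 + (β ^ m) ^ 4) = 0 := by
      linear_combination hγ5
    exact (mul_eq_zero.1 this).resolve_left (sub_ne_zero.2 hγ1)
  refine ⟨c, ?_, ?_, hnorm⟩
  · intro j hj
    rw [bch_sum_eq, hfil, Finset.sum_map]
    have hpow : ∀ k : Fin 5, β ^ (j * ((e k : Fin (5 * m)) : ℕ)) = (β ^ m) ^ (j * (k : ℕ)) := by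
      intro k
      rw [← pow_mul]
      congr 1
      change j * (k * m) = m * (j * k)
      ring
    simp only [hpow]
    generalize β ^ m = γ at *
    simp only [Finset.mem_insert, Finset.mem_singleton] at hj
    rcases hj with rfl | rfl
    · simp only [Fin.sum_univ_five]
      norm_num
      linear_combination hsum
    · simp only [Fin.sum_univ_five]
      norm_num
      linear_combination hsum + (γ + γ ^ 4 + γ ^ 2 * (γ ^ 5 + 1)) * hγ5
  · intro h
    rw [h] at hnorm
    simp at hnorm

theorem stmt_9 (s : ℕ) (hs : 2 ≤ s) (n : ℕ) (hn : n = (2 ^ (2 * s) + 1) * (2 ^ s - 1))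
    (α : GaloisField 2 (4 * s)) (hα : orderOf α = 2 ^ (4 * s) - 1)
    (β : GaloisField 2 (4 * s)) (hβ : β = α ^ (2 ^ s + 1))
    (hcase : Odd s ∨ 4 ∣ s) :
    5 ∣ n ∧ minDist (BCHCode n β {1, 3}) = 5 := by
  have h5 : 5 ∣ n := hn ▸ bch_five_dvd s hcase
  refine ⟨h5, ?_⟩
  have hs2 : 4 ≤ 2 ^ s := by
    calc 4 = 2 ^ 2 := by norm_num
      _ ≤ 2 ^ s := Nat.pow_le_pow_right (by norm_num) hs
  have hfac : 2 ^ (4 * s) - 1 = (2 ^ s + 1) * n := by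
    rw [hn, show 4 * s = s * 4 by ring, show 2 * s = s * 2 by ring, pow_mul, pow_mul]
    generalize 2 ^ s = q at *
    obtain ⟨r, rfl⟩ : ∃ r, q = r + 1 := ⟨q - 1, by omega⟩
    rw [Nat.add_sub_cancel]
    apply Nat.sub_eq_of_eq_add
    ring
  have hord : orderOf β = n := by
    rw [hβ, orderOf_pow_of_dvd (by omega) (by rw [hα, hfac]; exact dvd_mul_right _ _), hα, hfac]
    exact Nat.mul_div_cancel_left _ (by omega)
  have hnpos : 0 < n := by
    rw [hn]
    exact Nat.mul_pos (by positivity) (by omega)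
  have hβ0 : β ≠ 0 := by
    rintro h
    have h1 := pow_orderOf_eq_one β
    rw [hord, h, zero_pow hnpos.ne'] at h1
    exact zero_ne_one h1
  have hex : ∃ c ∈ BCHCode n β {1, 3}, c ≠ 0 ∧ hammingNorm c = 5 := by
    clear hn hfac
    obtain ⟨m, rfl⟩ := h5
    exact bch_mem β hord (by omega)
  haveI : CharP (GaloisField 2 (4 * s)) 2 := inferInstance
  apply le_antisymm
  · exact Nat.sInf_le hex
  · refine le_csInf ⟨5, hex⟩ ?_
    rintro w ⟨c, hc, hc0, rfl⟩
    have h1 := hc 1 (by simp)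
    have h3 := hc 3 (by simp)
    rw [bch_sum_eq] at h1 h3
    refine bch_lower _ (fun i : Fin n => β ^ (i : ℕ)) ?_ (fun i => pow_ne_zero _ hβ0) ?_ ?_ ?_
    · intro a b hab
      exact Fin.ext (pow_injOn_Iio_orderOf (by simp [hord]) (by simp [hord]) hab)
    · obtain ⟨i, hi⟩ := Function.ne_iff.1 hc0
      exact ⟨i, by simpa using hi⟩
    · simpa using h1
    · simpa [← pow_mul, mul_comm] using h3
end

section
/- Let s ≥ 3 be an integer and n = 2^{2s}+2^s+1. Then: (i) the multiplicative order of 2 modulo n equals 3s; (ii) for each i ∈ {1, 3}, the 2-cyclotomic coset C_i modulo n has cardinality 3s; and (iii) for each i ∈ {1, 3}, i is the coset leader of C_i. -/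
open Finset

theorem aux_mod (N x k n i : ℕ) (h : N = k * n + x) (h1 : i < x) (h2 : x < n) : i < N % n := by
  rw [h, Nat.mul_add_mod_self_right, Nat.mod_eq_of_lt h2]
  exact h1

theorem aux_key (s : ℕ) (hs : 3 ≤ s) (n i : ℕ) (hn : n = 2 ^ (2 * s) + 2 ^ s + 1)
    (hi : i = 1 ∨ i = 3) (j : ℕ) (hj : 0 < j) (hj3 : j < 3 * s) : i < i * 2 ^ j % n := by
  have hq8 : 8 ≤ 2 ^ s := by
    calc 8 = 2 ^ 3 := by norm_num
      _ ≤ 2 ^ s := Nat.pow_le_pow_right (by norm_num) hs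
  have hn' : n = 2 ^ s * 2 ^ s + 2 ^ s + 1 := by rw [hn]; ring
  have hB : ∀ b, b < s → 1 ≤ 2 ^ b ∧ (2 ^ s = 2 * 2 ^ b ∨ 4 * 2 ^ b ≤ 2 ^ s) := by
    intro b hb
    refine ⟨Nat.one_le_two_pow, ?_⟩
    rcases Nat.lt_or_ge (b + 1) s with h | h
    · right
      calc 4 * 2 ^ b = 2 ^ (b + 2) := by ring
        _ ≤ 2 ^ s := Nat.pow_le_pow_right (by norm_num) (by omega)
    · left
      have : s = b + 1 := by omega
      rw [this]; ring
  clear hn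
  rcases Nat.lt_or_ge j s with h1 | h1
  · have h2 : 2 ≤ 2 ^ j := by
      calc 2 = 2 ^ 1 := by norm_num
        _ ≤ 2 ^ j := Nat.pow_le_pow_right (by norm_num) hj
    have h3 := hB j h1
    generalize 2 ^ j = B at *
    generalize 2 ^ s = q at *
    apply aux_mod _ (i * B) 0 n i (by ring)
    · rcases hi with rfl | rfl <;> omega
    · have : B ≤ q := by omega
      subst hn'
      rcases hi with rfl | rfl <;> nlinarith
  rcases Nat.lt_or_ge j (2 * s) with h2 | h2
  · obtain ⟨b, rfl⟩ := Nat.exists_eq_add_of_le h1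
    obtain ⟨hb1, hb⟩ := hB b (by omega)
    rw [pow_add]
    generalize 2 ^ b = B at *
    generalize 2 ^ s = q at *
    subst hn'
    rcases hb with rfl | hb
    · rcases hi with rfl | rfl
      · apply aux_mod _ (2 * B * B) 0 _ _ (by ring) <;> nlinarith
      · obtain ⟨x, hx⟩ := Nat.exists_eq_add_of_le (show 2 * B + 1 ≤ 2 * B * B by nlinarith)
        apply aux_mod _ x 1 _ _ (by nlinarith) <;> nlinarith
    · apply aux_mod _ (i * (q * B)) 0 _ _ (by ring) <;> rcases hi with rfl | rfl <;> nlinarith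
  · obtain ⟨b, rfl⟩ := Nat.exists_eq_add_of_le h2
    obtain ⟨hb1, hb⟩ := hB b (by omega)
    rw [pow_add, two_mul, pow_add]
    generalize 2 ^ b = B at *
    generalize 2 ^ s = q at *
    subst hn'
    rcases hb with rfl | hb
    · rcases hi with rfl | rfl
      · apply aux_mod _ (2 * B * B + B + 1) (B - 1) _ _ ?_ (by nlinarith) (by nlinarith)
        obtain ⟨c, rfl⟩ := Nat.exists_eq_add_of_le hb1
        simp only [Nat.add_sub_cancel_left]; ring
      · apply aux_mod _ (2 * B * B + B + 2) (3 * B - 2) _ _ ?_ (by nlinarith) (by nlinarith)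
        obtain ⟨c, rfl⟩ := Nat.exists_eq_add_of_le hb1
        rw [show 3 * (1 + c) - 2 = 3 * c + 1 by omega]; ring
    · obtain ⟨c, rfl⟩ := Nat.exists_eq_add_of_le hb1
      obtain ⟨d, rfl⟩ := Nat.exists_eq_add_of_le hb
      rcases hi with rfl | rfl
      · generalize hq : 4 * (1 + c) + d = q at *
        obtain ⟨x, hx⟩ := Nat.exists_eq_add_of_le (show (1 + c) * (q + 1) ≤ q * q by nlinarith)
        apply aux_mod _ (x + q + 1) c _ _ (by nlinarith) (by omega)
        nlinarith
      · generalize hq : 4 * (1 + c) + d = q at *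
        obtain ⟨x, hx⟩ := Nat.exists_eq_add_of_le (show 3 * (1 + c) * (q + 1) ≤ q * q by nlinarith)
        apply aux_mod _ (x + q + 1) (3 * c + 2) _ _ (by nlinarith) (by omega)
        nlinarith

theorem aux_one (s n : ℕ) (hn : n = 2 ^ (2 * s) + 2 ^ s + 1) : 2 ^ (3 * s) ≡ 1 [MOD n] := by
  have h1 : 1 ≤ 2 ^ s := Nat.one_le_two_pow
  obtain ⟨c, hc⟩ := Nat.exists_eq_add_of_le h1
  have : 2 ^ (3 * s) = 1 + n * c := by
    rw [hn, mul_comm 3 s, mul_comm 2 s, pow_mul, pow_mul, hc]; ring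
  rw [this]
  simp [Nat.ModEq]

theorem stmt_10 (s : ℕ) (hs : 3 ≤ s) (n : ℕ)
    (hn : n = 2 ^ (2 * s) + 2 ^ s + 1) :
    orderOf (2 : ZMod n) = 3 * s ∧
    ∀ i ∈ ({1, 3} : Finset ℕ),
      (cycCoset n i).ncard = 3 * s ∧ cosetLeader n i = i := by
  have h3 := aux_one s n hn
  have hn9 : 9 < n := by
    have : 2 ^ 3 ≤ 2 ^ s := Nat.pow_le_pow_right (by norm_num) hs
    have : 2 ^ 3 ≤ 2 ^ (2 * s) := Nat.pow_le_pow_right (by norm_num) (by omega)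
    omega
  constructor
  · rw [orderOf_eq_iff (by omega)]
    constructor
    · have := (ZMod.natCast_eq_natCast_iff _ _ _).2 h3
      simpa using this
    · intro m hm hm0 h
      have hk := aux_key s hs n 1 hn (Or.inl rfl) m hm0 hm
      have h' : ((2 ^ m : ℕ) : ZMod n) = ((1 : ℕ) : ZMod n) := by simpa using h
      have h'' := (ZMod.natCast_eq_natCast_iff _ _ _).1 h'
      rw [one_mul, h'', Nat.mod_eq_of_lt (by omega)] at hk
      omega
  · intro i hi
    have hi' : i = 1 ∨ i = 3 := by simpa using hi
    have key := aux_key s hs n i hn hi'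
    have hin : i % n = i := Nat.mod_eq_of_lt (by omega)
    have hcop : Nat.Coprime n 2 := by
      rw [Nat.coprime_two_right]
      have h2 : Even (2 ^ (2 * s) + 2 ^ s) :=
        ((Nat.even_pow.2 ⟨even_two, by omega⟩).add (Nat.even_pow.2 ⟨even_two, by omega⟩))
      rw [hn]; exact h2.add_one
    have hred : ∀ j, i * 2 ^ j % n = i * 2 ^ (j % (3 * s)) % n := by
      intro j
      conv_lhs => rw [← Nat.div_add_mod j (3 * s), pow_add, pow_mul]
      have := ((h3.pow (j / (3 * s))).mul_right (2 ^ (j % (3 * s)))).mul_left i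
      simpa [Nat.ModEq] using this
    have hset : cycCoset n i = ((Finset.range (3 * s)).image (fun j => i * 2 ^ j % n) : Finset ℕ) := by
      ext x
      simp only [cycCoset, Set.mem_setOf_eq, Finset.coe_image, Set.mem_image, Finset.mem_coe,
        Finset.mem_range]
      constructor
      · rintro ⟨j, rfl⟩
        exact ⟨j % (3 * s), Nat.mod_lt _ (by omega), (hred j).symm⟩
      · rintro ⟨j, _, rfl⟩
        exact ⟨j, rfl⟩
    have hne : ∀ j k, j < k → k < 3 * s → i * 2 ^ j % n ≠ i * 2 ^ k % n := by
      intro j k hjk hk h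
      obtain ⟨d, rfl⟩ := Nat.exists_eq_add_of_lt hjk
      have h1 : i * 2 ^ j ≡ i * 2 ^ (d + 1) * 2 ^ j [MOD n] := by
        have e : i * 2 ^ (d + 1) * 2 ^ j = i * 2 ^ (j + d + 1) := by ring
        rw [e]; exact h
      have h2 : i % n = i * 2 ^ (d + 1) % n :=
        Nat.ModEq.cancel_right_of_coprime (Nat.Coprime.pow_right j hcop) h1
      have := key (d + 1) (by omega) (by omega)
      omega
    constructor
    · rw [hset, Set.ncard_coe_finset, Finset.card_image_of_injOn, Finset.card_range]
      intro j hj k hk h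
      simp only [Finset.coe_range, Set.mem_Iio] at hj hk
      rcases lt_trichotomy j k with hl | hl | hl
      · exact absurd h (hne j k hl hk)
      · exact hl
      · exact absurd h.symm (hne k j hl hj)
    · have hmem : i ∈ cycCoset n i := ⟨0, by simp [hin]⟩
      apply le_antisymm (Nat.sInf_le hmem)
      apply le_csInf ⟨i, hmem⟩
      rintro x ⟨j, rfl⟩
      rw [hred j]
      rcases Nat.eq_zero_or_pos (j % (3 * s)) with h0 | h0
      · rw [h0]; simp [hin]
      · exact (key _ h0 (Nat.mod_lt _ (by omega))).le
end

section
/- Let s ≥ 2. The code C_{(2,n,3,1)} of length n = 2^{2s}+2^s+1 has dimension n − 3s and minimum distance d satisfying 3 ≤ d ≤ 4. -/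
open Finset

theorem aux_arith (s : ℕ) : 2 ^ (3 * s) - 1 = (2 ^ s - 1) * (2 ^ (2 * s) + 2 ^ s + 1) := by
  have h : 1 ≤ 2 ^ s := Nat.one_le_two_pow
  have e2 : 2 ^ (2 * s) = (2 ^ s) ^ 2 := by rw [mul_comm, pow_mul]
  have e3 : 2 ^ (3 * s) = (2 ^ s) ^ 3 := by rw [mul_comm, pow_mul]
  rw [e2, e3]
  generalize 2 ^ s = q at *
  obtain ⟨r, rfl⟩ := Nat.exists_eq_add_of_le h
  rw [Nat.add_sub_cancel_left]
  apply Nat.sub_eq_of_eq_add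
  ring

theorem aux_choose (s : ℕ) (hs : 2 ≤ s) :
    2 ^ (3 * s) < (2 ^ (2 * s) + 2 ^ s + 1).choose 2 := by
  have h : 2 ^ 2 ≤ 2 ^ s := Nat.pow_le_pow_right (by norm_num) hs
  have e2 : 2 ^ (2 * s) = (2 ^ s) ^ 2 := by rw [mul_comm, pow_mul]
  have e3 : 2 ^ (3 * s) = (2 ^ s) ^ 3 := by rw [mul_comm, pow_mul]
  rw [e2, e3, Nat.choose_two_right, Nat.add_sub_cancel]
  generalize 2 ^ s = q at *
  rw [Nat.lt_iff_add_one_le, Nat.le_div_iff_mul_le (by norm_num)]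
  obtain ⟨r, rfl⟩ := Nat.exists_eq_add_of_le h
  ring_nf
  nlinarith [Nat.zero_le r]

/-- The syndrome map. -/
noncomputable def syn {F : Type} [Field F] [Algebra (ZMod 2) F] (n : ℕ) (β : F) :
    (Fin n → ZMod 2) →ₗ[ZMod 2] F :=
  Fintype.linearCombination (ZMod 2) (fun i : Fin n => β ^ (i : ℕ))

theorem syn_apply {F : Type} [Field F] [Algebra (ZMod 2) F] (n : ℕ) (β : F)
    (c : Fin n → ZMod 2) : syn n β c = ∑ i, c i • β ^ (i : ℕ) := by
  simp [syn, Fintype.linearCombination_apply]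

theorem code_eq_ker {F : Type} [Field F] [Algebra (ZMod 2) F] (n : ℕ) (β : F) :
    BCHCode n β {1} = LinearMap.ker (syn n β) := by
  ext c
  rw [LinearMap.mem_ker, syn_apply]
  change (∀ j ∈ ({1} : Finset ℕ), ∑ i : Fin n, c i • β ^ (j * (i : ℕ)) = 0) ↔ _
  simp

theorem aux_adjoin (s : ℕ) (hs : 2 ≤ s) (β : GaloisField 2 (3 * s))
    (hβ : orderOf β = 2 ^ (2 * s) + 2 ^ s + 1) :
    IntermediateField.adjoin (ZMod 2) {β} = ⊤ := by
  set K := IntermediateField.adjoin (ZMod 2) {β} with hK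
  have hfr : Module.finrank (ZMod 2) (GaloisField 2 (3 * s)) = 3 * s :=
    GaloisField.finrank 2 (by omega)
  have hmul := Module.finrank_mul_finrank (ZMod 2) K (GaloisField 2 (3 * s))
  rw [hfr] at hmul
  set m := Module.finrank (ZMod 2) K with hm
  have hβK : β ∈ K := IntermediateField.mem_adjoin_simple_self _ _
  have hβ0 : β ≠ 0 := by
    rintro rfl
    have := pow_orderOf_eq_one (0 : GaloisField 2 (3 * s))
    rw [hβ] at this
    simp at this
  have : Fintype K := Fintype.ofFinite K
  have hcard : Fintype.card K = 2 ^ m := by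
    rw [Module.card_eq_pow_finrank (K := ZMod 2) (V := K), ZMod.card]
  have hpow : β ^ (2 ^ m - 1) = 1 := by
    have := FiniteField.pow_card_sub_one_eq_one (⟨β, hβK⟩ : K)
      (by intro h; exact hβ0 (congrArg Subtype.val h))
    rw [hcard] at this
    exact congrArg Subtype.val this
  have hm0 : 0 < m := Module.finrank_pos
  have hdvd := orderOf_dvd_of_pow_eq_one hpow
  have h1 : 1 < 2 ^ m := Nat.one_lt_two_pow (by omega)
  have hle := Nat.le_of_dvd (by omega) hdvd
  rw [hβ] at hle
  have hlt : 2 ^ (2 * s) < 2 ^ m := by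
    have h3 := Nat.sub_le (2 ^ m) 1
    have h4 : 0 < 2 ^ s := by positivity
    linarith
  have hlt2 : 2 * s < m := (Nat.pow_lt_pow_iff_right (by norm_num)).1 hlt
  have hk : Module.finrank K (GaloisField 2 (3 * s)) = 1 := by
    generalize Module.finrank K (GaloisField 2 (3 * s)) = k at *
    rcases k with _ | _ | k
    · omega
    · rfl
    · exfalso
      nlinarith
  exact IntermediateField.finrank_eq_one_iff_eq_top.1 hk

theorem syn_surj (s : ℕ) (hs : 2 ≤ s) (n : ℕ) (hn : n = 2 ^ (2 * s) + 2 ^ s + 1)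
    (β : GaloisField 2 (3 * s)) (hβ : orderOf β = n) :
    LinearMap.range (syn n β) = ⊤ := by
  have h := aux_adjoin s hs β (hβ.trans hn)
  have h2 : Algebra.adjoin (ZMod 2) {β} = ⊤ := by
    rw [← IntermediateField.adjoin_simple_toSubalgebra_of_isAlgebraic
      (Algebra.IsAlgebraic.isAlgebraic β), h]
    rfl
  rw [syn, Fintype.range_linearCombination, eq_top_iff, ← Algebra.top_toSubmodule, ← h2,
    Algebra.adjoin_eq_span, Submodule.span_le]
  intro x hx
  obtain ⟨k, rfl⟩ := Submonoid.mem_closure_singleton.1 hx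
  apply Submodule.subset_span
  refine ⟨⟨k % n, Nat.mod_lt _ (by rw [hn]; positivity)⟩, ?_⟩
  simp only
  rw [← hβ, pow_mod_orderOf]

theorem exists_le_four {F : Type} [Field F] [Fintype F] [Algebra (ZMod 2) F] (n : ℕ) (β : F)
    (h : Fintype.card F < n.choose 2) :
    ∃ c ∈ BCHCode n β {1}, c ≠ 0 ∧ hammingNorm c ≤ 4 := by
  classical
  let v : Finset (Fin n) → (Fin n → ZMod 2) := fun P i => if i ∈ P then 1 else 0
  obtain ⟨P, hP, Q, hQ, hPQ, he⟩ := Finset.exists_ne_map_eq_of_card_lt_of_maps_to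
    (s := Finset.powersetCard 2 (Finset.univ : Finset (Fin n))) (t := (Finset.univ : Finset F))
    (by simpa using h) (f := fun P => syn n β (v P)) (by intro x _; simp)
  rw [Finset.mem_powersetCard] at hP hQ
  refine ⟨v P - v Q, ?_, ?_, ?_⟩
  · rw [code_eq_ker, LinearMap.mem_ker, map_sub]
    exact sub_eq_zero.2 he
  · intro h0
    apply hPQ
    ext i
    have := congrFun (sub_eq_zero.1 h0) i
    by_cases h1 : i ∈ P <;> by_cases h2 : i ∈ Q <;> simp_all [v]
  · have hsub : (Finset.univ.filter fun i => (v P - v Q) i ≠ 0) ⊆ P ∪ Q := by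
      intro i hi
      rw [Finset.mem_filter] at hi
      by_contra h3
      rw [Finset.mem_union, not_or] at h3
      apply hi.2
      simp [v, h3.1, h3.2]
    calc hammingNorm (v P - v Q) ≤ (P ∪ Q).card := Finset.card_le_card hsub
      _ ≤ P.card + Q.card := Finset.card_union_le _ _
      _ = 4 := by rw [hP.2, hQ.2]

theorem three_le {F : Type} [Field F] [Algebra (ZMod 2) F] (n : ℕ) (β : F)
    (hn : n ≠ 0) (hβ : orderOf β = n) (c : Fin n → ZMod 2) (hc : c ∈ BCHCode n β {1})
    (h0 : c ≠ 0) : 3 ≤ hammingNorm c := by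
  classical
  have hβ0 : β ≠ 0 := by
    rintro rfl
    have := pow_orderOf_eq_one (0 : F)
    rw [hβ, zero_pow hn] at this
    exact zero_ne_one this
  have hchar : CharP F 2 := charP_of_injective_algebraMap (algebraMap (ZMod 2) F).injective 2
  rw [code_eq_ker, LinearMap.mem_ker, syn_apply] at hc
  have hz : ∀ x : ZMod 2, x ≠ 0 → x = 1 := by decide
  have hsum : ∑ i ∈ Finset.univ.filter (fun i => c i ≠ 0), β ^ (i : ℕ) = 0 := by
    rw [← hc, Finset.sum_filter]
    refine Finset.sum_congr rfl fun i _ => ?_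
    by_cases hi : c i = 0
    · simp [hi]
    · simp [hz _ hi]
  have hpos : 0 < hammingNorm c := hammingNorm_pos_iff.2 h0
  by_contra hlt
  have hcases : hammingNorm c = 1 ∨ hammingNorm c = 2 := by omega
  unfold hammingNorm at hcases
  rcases hcases with h1 | h2
  · obtain ⟨a, ha⟩ := Finset.card_eq_one.1 h1
    rw [ha, Finset.sum_singleton] at hsum
    exact pow_ne_zero _ hβ0 hsum
  · obtain ⟨a, b, hab, he⟩ := Finset.card_eq_two.1 h2
    rw [he, Finset.sum_pair hab] at hsum
    have heq := CharTwo.add_eq_zero.1 hsum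
    have := pow_injOn_Iio_orderOf (x := β) (by simp [hβ]) (by simp [hβ]) heq
    exact hab (Fin.ext this)

theorem stmt_11 (s : ℕ) (hs : 2 ≤ s) (n : ℕ) (hn : n = 2 ^ (2 * s) + 2 ^ s + 1)
    (α : GaloisField 2 (3 * s)) (hα : orderOf α = 2 ^ (3 * s) - 1)
    (β : GaloisField 2 (3 * s)) (hβ : β = α ^ (2 ^ s - 1)) :
    Module.finrank (ZMod 2) (BCHCode n β {1}) = n - 3 * s ∧
    3 ≤ minDist (BCHCode n β {1}) ∧
    minDist (BCHCode n β {1}) ≤ 4 := by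
  have hord : orderOf β = n := by
    have h1 : 1 < 2 ^ s := Nat.one_lt_two_pow (by omega)
    rw [hβ, orderOf_pow_of_dvd (by omega) (by rw [hα, aux_arith]; exact Dvd.intro _ rfl), hα,
      aux_arith, Nat.mul_div_cancel_left _ (by omega), hn]
  have hfr : Module.finrank (ZMod 2) (GaloisField 2 (3 * s)) = 3 * s :=
    GaloisField.finrank 2 (by omega)
  have : Fintype (GaloisField 2 (3 * s)) := Fintype.ofFinite _
  have hcard : Fintype.card (GaloisField 2 (3 * s)) = 2 ^ (3 * s) := by
    rw [← Nat.card_eq_fintype_card]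
    exact GaloisField.card 2 _ (by omega)
  obtain ⟨c, hc, hc0, hc4⟩ := exists_le_four n β (by rw [hcard, hn]; exact aux_choose s hs)
  refine ⟨?_, ?_, ?_⟩
  · have h := LinearMap.finrank_range_add_finrank_ker (syn n β)
    rw [syn_surj s hs n hn β hord, finrank_top, hfr, Module.finrank_fin_fun] at h
    rw [code_eq_ker]
    omega
  · obtain ⟨c', hc', h0', he⟩ := Nat.sInf_mem
      (s := {w | ∃ c ∈ BCHCode n β {1}, c ≠ 0 ∧ hammingNorm c = w}) ⟨_, c, hc, hc0, rfl⟩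
    unfold minDist
    rw [← he]
    exact three_le n β (by rw [hn]; positivity) hord c' hc' h0'
  · have h5 : minDist (BCHCode n β {1}) ≤ hammingNorm c := Nat.sInf_le ⟨c, hc, hc0, rfl⟩
    exact h5.trans hc4
end

section
/- Let s ≥ 4 be an integer and n = (4^s−1)/3. Then: (i) the multiplicative order of 2 modulo n equals 2s; (ii) for every odd integer i with 1 ≤ i ≤ 2^s/3, the 2-cyclotomic coset C_i modulo n has cardinality 2s; and (iii) every such odd i is the coset leader of its 2-cyclotomic coset C_i. -/
open Finset

lemma key_shift (s a j N : ℕ) (hN : N + 1 = 4 ^ s) (ha : a < 2 ^ s) (hodd : Odd a)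
    (hj : 0 < j) (hj2 : j < 2 * s) : a < a * 2 ^ j % N := by
  have h4 : (4 : ℕ) ^ s = 2 ^ s * 2 ^ s := by
    rw [← mul_pow]; norm_num
  have hapos : 0 < a := hodd.pos
  have hs2 : 2 ≤ 2 ^ s := by
    have : 1 ≤ s := by omega
    calc 2 = 2 ^ 1 := rfl
      _ ≤ 2 ^ s := Nat.pow_le_pow_right (by norm_num) this
  rcases le_or_gt j s with h | h
  · have h1 : 2 ^ j ≤ 2 ^ s := Nat.pow_le_pow_right (by norm_num) h
    have h2 : a * 2 ^ j < N := by
      have : (a + 1) * 2 ^ j ≤ 2 ^ s * 2 ^ s := Nat.mul_le_mul ha h1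
      have h3 : (2:ℕ) ≤ 2 ^ j := by
        calc 2 = 2 ^ 1 := rfl
          _ ≤ 2 ^ j := Nat.pow_le_pow_right (by norm_num) hj
      nlinarith
    rw [Nat.mod_eq_of_lt h2]
    have h3 : (2:ℕ) ≤ 2 ^ j := by
      calc 2 = 2 ^ 1 := rfl
        _ ≤ 2 ^ j := Nat.pow_le_pow_right (by norm_num) hj
    nlinarith
  · obtain ⟨k, hk⟩ : ∃ k, j + (k + 1) = 2 * s := ⟨2 * s - j - 1, by omega⟩
    obtain ⟨t, ht⟩ : ∃ t, j = s + t := ⟨j - s, by omega⟩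
    have hjk : 2 ^ j * 2 ^ (k + 1) = N + 1 := by
      rw [← pow_add, hk, hN, h4, ← pow_add, two_mul]
    have hdm := Nat.div_add_mod a (2 ^ (k + 1))
    set q := a / 2 ^ (k + 1)
    set r := a % 2 ^ (k + 1) with hr
    have hrlt : r < 2 ^ (k + 1) := Nat.mod_lt _ (by positivity)
    have hrpos : 0 < r := by
      rcases Nat.eq_zero_or_pos r with h0 | h0
      · exfalso
        rw [h0, pow_succ] at hdm
        have : Even a := ⟨2 ^ k * q, by rw [← hdm]; ring⟩
        exact (Nat.not_even_iff_odd.mpr hodd) this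
      · exact h0
    have heq : a * 2 ^ j = (q + r * 2 ^ j) + N * q := by
      calc a * 2 ^ j = (2 ^ (k + 1) * q + r) * 2 ^ j := by rw [hdm]
        _ = (2 ^ j * 2 ^ (k + 1)) * q + r * 2 ^ j := by ring
        _ = _ := by rw [hjk]; ring
    have hjs : 2 ^ s < 2 ^ j := Nat.pow_lt_pow_right (by norm_num) h
    have hqa : q ≤ a := Nat.div_le_self _ _
    have h5 : (r + 1) * 2 ^ j ≤ N + 1 := by
      rw [← hjk, mul_comm (2 ^ j)]
      exact Nat.mul_le_mul_right _ hrlt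
    have hlt : q + r * 2 ^ j < N := by
      have : (r + 1) * 2 ^ j = r * 2 ^ j + 2 ^ j := by ring
      omega
    rw [heq, Nat.add_mul_mod_self_left, Nat.mod_eq_of_lt hlt]
    have : 2 ^ j ≤ r * 2 ^ j := Nat.le_mul_of_pos_left _ hrpos
    have hq0 : 0 ≤ q := Nat.zero_le q
    linarith

lemma key_coset (s n i j : ℕ) (hN : 3 * n + 1 = 4 ^ s) (hodd : Odd i) (hi : i ≤ 2 ^ s / 3)
    (hj : 0 < j) (hj2 : j < 2 * s) : i < i * 2 ^ j % n := by
  have h3 : 3 * i < 2 ^ s := by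
    have h1 : 3 * i ≤ 2 ^ s := by omega
    have h2 : 3 * i ≠ 2 ^ s := by
      intro h
      have h3 : 3 ∣ 2 ^ s := ⟨i, h.symm⟩
      have := Nat.Prime.dvd_of_dvd_pow Nat.prime_three h3
      omega
    omega
  have := key_shift s (3 * i) j (3 * n) hN h3 (Odd.mul (by decide) hodd) hj hj2
  rw [mul_assoc, Nat.mul_mod_mul_left] at this
  omega

theorem stmt_13 (s : ℕ) (hs : 4 ≤ s) (n : ℕ) (hn : n = (4 ^ s - 1) / 3) :
    orderOf (2 : ZMod n) = 2 * s ∧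
    ∀ i : ℕ, Odd i → 1 ≤ i → i ≤ 2 ^ s / 3 →
      (cycCoset n i).ncard = 2 * s ∧ cosetLeader n i = i := by
  have hN : 3 * n + 1 = 4 ^ s := by
    have h1 : 4 ^ s % 3 = 1 := by
      rw [Nat.pow_mod]; simp
    generalize 4 ^ s = M at *
    omega
  have h2s : 16 ≤ 2 ^ s := by
    calc 16 = 2 ^ 4 := rfl
      _ ≤ 2 ^ s := Nat.pow_le_pow_right (by norm_num) hs
  have h4 : (4 : ℕ) ^ s = 2 ^ s * 2 ^ s := by
    rw [← mul_pow]; norm_num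
  have hbig : 2 ^ s < n := by nlinarith
  have hpow : 2 ^ (2 * s) = n * 3 + 1 := by
    rw [pow_mul]; norm_num; omega
  have hper : ∀ i j, i * 2 ^ j % n = i * 2 ^ (j % (2 * s)) % n := by
    intro i j
    have e : 2 ^ (2 * s) ≡ 1 [MOD n] := by
      rw [hpow]; simp [Nat.ModEq]
    have e2 : i * 2 ^ j ≡ i * 2 ^ (j % (2 * s)) [MOD n] := by
      conv_lhs => rw [← Nat.div_add_mod j (2 * s), pow_add, pow_mul]
      have := ((e.pow (j / (2 * s))).mul_right (2 ^ (j % (2 * s)))).mul_left i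
      simpa using this
    exact e2
  have hcop : Nat.Coprime n 2 := by
    have h1 : Even (4 ^ s) := (by decide : Even 4).pow_of_ne_zero (by omega)
    rw [Nat.coprime_two_right]
    rcases Nat.even_or_odd n with h | h
    · obtain ⟨x, hx⟩ := h
      obtain ⟨y, hy⟩ := h1
      omega
    · exact h
  constructor
  · have hz : ∀ j, (2 : ZMod n) ^ j = ((2 ^ j : ℕ) : ZMod n) := by intro j; push_cast; rfl
    rw [orderOf_eq_iff (by omega)]
    constructor
    · rw [hz, hpow]; simp
    · intro m hm hm0 h
      have hk := key_coset s n 1 m hN (by decide) (by omega) hm0 hm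
      rw [hz, ← Nat.cast_one, ZMod.natCast_eq_natCast_iff'] at h
      rw [one_mul, h] at hk
      have := Nat.mod_le 1 n
      omega
  · intro i hodd hi1 hi
    have hin : i % n = i := Nat.mod_eq_of_lt (by omega)
    have himg : cycCoset n i = (((Finset.range (2 * s)).image (fun j => i * 2 ^ j % n) : Finset ℕ) : Set ℕ) := by
      ext x
      simp only [cycCoset, Set.mem_ofPred_eq, Finset.coe_image, Set.mem_image, Finset.coe_range, Set.mem_Iio]
      constructor
      · rintro ⟨j, rfl⟩
        exact ⟨j % (2 * s), Nat.mod_lt _ (by omega), (hper i j).symm⟩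
      · rintro ⟨j, -, rfl⟩
        exact ⟨j, rfl⟩
    have hne : ∀ j k, j < k → k < 2 * s → i * 2 ^ j % n ≠ i * 2 ^ k % n := by
      intro j k hjk hk h
      have h' : i * 2 ^ j ≡ i * 2 ^ (k - j) * 2 ^ j [MOD n] := by
        rw [mul_assoc, ← pow_add, Nat.sub_add_cancel hjk.le]; exact h
      have h'' : i ≡ i * 2 ^ (k - j) [MOD n] :=
        Nat.ModEq.cancel_right_of_coprime (hcop.pow_right j) h'
      have := key_coset s n i (k - j) hN hodd hi (by omega) (by omega)
      unfold Nat.ModEq at h''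
      omega
    constructor
    · rw [himg, Set.ncard_coe_finset, Finset.card_image_of_injOn, Finset.card_range]
      intro j hj k hk h
      simp only [Finset.coe_range, Set.mem_Iio] at hj hk
      rcases lt_trichotomy j k with h1 | h1 | h1
      · exact absurd h (hne j k h1 hk)
      · exact h1
      · exact absurd h.symm (hne k j h1 hj)
    · have hmem : i ∈ cycCoset n i := ⟨0, by simp [hin]⟩
      apply le_antisymm
      · exact Nat.sInf_le hmem
      · have h := Nat.sInf_mem (⟨i, hmem⟩ : (cycCoset n i).Nonempty)
        obtain ⟨j, hj⟩ := h
        unfold cosetLeader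
        rw [hj, hper]
        rcases Nat.eq_zero_or_pos (j % (2 * s)) with h0 | h0
        · rw [h0]; simp [hin]
        · exact (key_coset s n i _ hN hodd hi h0 (Nat.mod_lt _ (by omega))).le
end

section
/- Let s ≥ 4. The code C_{(2,n,3,1)} of length n = (4^s−1)/3 has dimension n − 2s and minimum distance exactly 3. -/
open Finset

/-- In a finite field of characteristic two, there is an index two subgroup behaviour of `t^2+t`. -/
theorem as_sum {F : Type} [Field F] [CharP F 2] [Finite F] (a b : F)
    (ha : ¬ ∃ t : F, t ^ 2 + t = a) (hb : ¬ ∃ t : F, t ^ 2 + t = b) :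
    ∃ t : F, t ^ 2 + t = a + b := by
  have h2 : (2 : F) = 0 := CharTwo.two_eq_zero
  let f : F →+ F :=
    { toFun := fun t => t ^ 2 + t
      map_zero' := by simp
      map_add' := fun x y => by linear_combination (x * y) * h2 }
  have hker : Nat.card f.ker = 2 := by
    have : (f.ker : Set F) = {0, 1} := by
      ext x
      simp only [SetLike.mem_coe, AddMonoidHom.mem_ker, Set.mem_insert_iff, Set.mem_singleton_iff]
      change x ^ 2 + x = 0 ↔ _
      constructor
      · intro h
        have : x * (x - 1) = 0 := by linear_combination h - x * h2
        rcases mul_eq_zero.mp this with h | h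
        · exact Or.inl h
        · exact Or.inr (sub_eq_zero.mp h)
      · rintro (rfl | rfl)
        · simp
        · linear_combination h2
    change Nat.card (f.ker : Set F) = 2
    rw [this, Nat.card_coe_set_eq, Set.ncard_pair zero_ne_one]
  have hidx : f.range.index = 2 := by
    have h1 := f.range.card_mul_index
    have h3 := f.ker.card_mul_index
    rw [AddSubgroup.index_ker, hker] at h3
    have : 0 < Nat.card f.range := Nat.card_pos
    rw [← h3, mul_comm] at h1
    exact Nat.eq_of_mul_eq_mul_right this h1
  have := (AddSubgroup.add_mem_iff_of_index_two hidx (a := a) (b := b)).2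
    (iff_of_false (fun h => ha h) (fun h => hb h))
  exact this

theorem as_add {F : Type} [Field F] [CharP F 2] (a b : F)
    (ha : ∃ t : F, t ^ 2 + t = a) (hb : ∃ t : F, t ^ 2 + t = b) :
    ∃ t : F, t ^ 2 + t = a + b := by
  have h2 : (2 : F) = 0 := CharTwo.two_eq_zero
  obtain ⟨t, rfl⟩ := ha
  obtain ⟨u, rfl⟩ := hb
  exact ⟨t + u, by linear_combination (t * u) * h2⟩

theorem exists_good_triple {F : Type} [Field F] [CharP F 2] [Finite F] (hF : 16 < Nat.card F) :
    ∃ x y z : F, x ^ 4 ≠ x ∧ y ^ 4 ≠ y ∧ z ^ 4 ≠ z ∧ (x + y) ^ 4 ≠ x + y ∧ (x + z) ^ 4 ≠ x + z ∧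
      (y + z) ^ 4 ≠ y + z ∧ (x + y + z) ^ 4 ≠ x + y + z := by
  classical
  have := Fintype.ofFinite F
  rw [Nat.card_eq_fintype_card] at hF
  have h2 : (2 : F) = 0 := CharTwo.two_eq_zero
  let S : Finset F := (Polynomial.X ^ 4 - Polynomial.X : Polynomial F).roots.toFinset
  have hne : (Polynomial.X ^ 4 - Polynomial.X : Polynomial F) ≠ 0 :=
    FiniteField.X_pow_card_sub_X_ne_zero F (by norm_num)
  have hS : ∀ x : F, x ^ 4 = x → x ∈ S := by
    intro x hx
    simp [S, hne, hx]
  have hcS : S.card ≤ 4 := by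
    refine (Multiset.toFinset_card_le _).trans ((Polynomial.card_roots' _).trans ?_)
    rw [FiniteField.X_pow_card_sub_X_natDegree_eq F (by norm_num)]
  have key : ∀ T : Finset F, T.card ≤ 16 → ∃ x, x ∉ T := by
    intro T hT
    by_contra! h
    have : T = Finset.univ := Finset.eq_univ_iff_forall.2 h
    rw [this, Finset.card_univ] at hT
    omega
  have hsh : ∀ v w : F, w ∉ S.image (fun t => v + t) → (v + w) ^ 4 ≠ v + w := by
    intro v w hw h
    apply hw
    rw [Finset.mem_image]
    exact ⟨v + w, hS _ h, by linear_combination v * h2⟩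
  have hi : ∀ v : F, (S.image (fun t => v + t)).card ≤ 4 := fun v =>
    Finset.card_image_le.trans hcS
  obtain ⟨x, hx⟩ := key S (by omega)
  obtain ⟨y, hy⟩ := key (S ∪ S.image (fun t => x + t)) (by
    have := Finset.card_union_le S (S.image (fun t => x + t))
    have := hi x
    omega)
  obtain ⟨z, hz⟩ := key ((S ∪ S.image (fun t => x + t)) ∪
      (S.image (fun t => y + t) ∪ S.image (fun t => (x + y) + t))) (by
    have := Finset.card_union_le S (S.image (fun t => x + t))
    have := Finset.card_union_le (S.image (fun t => y + t)) (S.image (fun t => (x + y) + t))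
    have := Finset.card_union_le (S ∪ S.image (fun t => x + t))
      (S.image (fun t => y + t) ∪ S.image (fun t => (x + y) + t))
    have := hi x
    have := hi y
    have := hi (x + y)
    omega)
  simp only [Finset.mem_union, not_or] at hy hz
  exact ⟨x, y, z, fun h => hx (hS _ h), fun h => hy.1 (hS _ h), fun h => hz.1.1 (hS _ h),
    hsh _ _ hy.2, hsh _ _ hz.1.2, hsh _ _ hz.2.1, hsh _ _ hz.2.2⟩

theorem exists_good_b {F : Type} [Field F] [CharP F 2] [Finite F] (hF : 16 < Nat.card F) :
    ∃ b : F, b ^ 4 ≠ b ∧ ∃ t : F, t ^ 2 + t = b ^ 3 := by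
  by_contra! hcon
  have h2 : (2 : F) = 0 := CharTwo.two_eq_zero
  have hc : ∀ b : F, b ^ 4 ≠ b → ¬ ∃ t : F, t ^ 2 + t = b ^ 3 := by
    rintro b hb ⟨t, ht⟩
    exact hcon b hb t ht
  obtain ⟨x, y, z, h1, h3, h4, h5, h6, h7, h8⟩ := exists_good_triple hF
  apply hc _ h8
  have e := as_add _ _ (as_add _ _ (as_sum _ _ (hc _ h1) (hc _ h3)) (as_sum _ _ (hc _ h4) (hc _ h5)))
    (as_sum _ _ (hc _ h6) (hc _ h7))
  have : (x + y + z) ^ 3 = x ^ 3 + y ^ 3 + (z ^ 3 + (x + y) ^ 3) + ((x + z) ^ 3 + (y + z) ^ 3) := by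
    linear_combination (-x ^ 3 - y ^ 3 - z ^ 3 + 3 * x * y * z) * h2
  rw [this]
  exact e

theorem exists_cubes {F : Type} [Field F] [CharP F 2] [Finite F] (hF : 16 < Nat.card F)
    (w : F) (hw : w ^ 3 = 1) (hw1 : w ≠ 1) :
    ∃ x y : F, x ≠ 0 ∧ y ≠ 0 ∧ 1 + x ^ 3 + y ^ 3 = 0 := by
  have h2 : (2 : F) = 0 := CharTwo.two_eq_zero
  have hone : ∃ t : F, t ^ 2 + t = 1 := by
    refine ⟨w, ?_⟩
    have : (w - 1) * (w ^ 2 + w + 1) = 0 := by linear_combination hw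
    rcases mul_eq_zero.mp this with h | h
    · exact absurd (sub_eq_zero.mp h) hw1
    · linear_combination h - h2
  obtain ⟨b, hb, hbt⟩ := exists_good_b hF
  have hb0 : b ≠ 0 := by rintro rfl; simp at hb
  obtain ⟨t, ht⟩ := as_add _ _ hone hbt
  have hb3 : 1 + b ^ 3 ≠ 0 := by
    intro h
    apply hb
    linear_combination b * h - b * h2
  refine ⟨b⁻¹ * t, b⁻¹ * (t + 1), ?_, ?_, ?_⟩
  · apply mul_ne_zero (inv_ne_zero hb0)
    rintro rfl
    apply hb3
    rw [← ht]; ring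
  · apply mul_ne_zero (inv_ne_zero hb0)
    intro h
    apply hb3
    rw [← ht]
    linear_combination t * h
  · field_simp
    linear_combination (t ^ 3 + t ^ 2 + t + b ^ 3 + 1) * h2 + ht

theorem adjoin_top {F : Type} [Field F] [Algebra (ZMod 2) F] [Finite F] (s n : ℕ) (hs : 4 ≤ s)
    (hn : 3 * n + 1 = 4 ^ s) (hfr : Module.finrank (ZMod 2) F = 2 * s) (β : F)
    (hβ : IsPrimitiveRoot β n) : IntermediateField.adjoin (ZMod 2) {β} = ⊤ := by
  have : FiniteDimensional (ZMod 2) F := Module.Finite.of_finite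
  set K := IntermediateField.adjoin (ZMod 2) {β} with hK
  have h4 : 4 ^ s = 2 ^ s * 2 ^ s := by rw [← mul_pow]; norm_num
  have h16 : 2 ^ 4 ≤ 2 ^ s := Nat.pow_le_pow_right (by norm_num) hs
  have hmul := Module.finrank_mul_finrank (ZMod 2) K F
  rw [hfr] at hmul
  have hle : ¬ Module.finrank (ZMod 2) K ≤ s := by
    intro hle
    have : Fintype K := Fintype.ofFinite K
    have hcard : Fintype.card K = 2 ^ Module.finrank (ZMod 2) K := by
      have := Module.card_eq_pow_finrank (K := ZMod 2) (V := K)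
      rwa [ZMod.card] at this
    let b : K := ⟨β, IntermediateField.mem_adjoin_simple_self _ β⟩
    have hb0 : b ≠ 0 := by
      intro h
      have hb : β = 0 := congrArg Subtype.val h
      exact hβ.ne_zero (by nlinarith) hb
    have h1 : b ^ (Fintype.card K - 1) = 1 := FiniteField.pow_card_sub_one_eq_one b hb0
    have h2 : β ^ (Fintype.card K - 1) = 1 := by
      have := congrArg Subtype.val h1
      simpa [b] using this
    have h3 := hβ.dvd_of_pow_eq_one _ h2
    have hd : 0 < Module.finrank (ZMod 2) K := Module.finrank_pos
    have h5 : 2 ^ 1 ≤ 2 ^ Module.finrank (ZMod 2) K := Nat.pow_le_pow_right (by norm_num) hd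
    have h6 : 2 ^ Module.finrank (ZMod 2) K ≤ 2 ^ s := Nat.pow_le_pow_right (by norm_num) hle
    have h7 := Nat.le_of_dvd (by omega) h3
    rw [hcard] at h7
    have : n ≤ 2 ^ s := by omega
    nlinarith
  have hr1 : Module.finrank K F = 1 := by
    have : 0 < Module.finrank K F := Module.finrank_pos
    by_contra hne
    have : 2 ≤ Module.finrank K F := by omega
    nlinarith
  exact IntermediateField.finrank_eq_one_iff_eq_top.mp hr1

theorem dim_part {F : Type} [Field F] [Algebra (ZMod 2) F] [Finite F] (s n : ℕ) (hs : 4 ≤ s)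
    (hn : 3 * n + 1 = 4 ^ s) (hfr : Module.finrank (ZMod 2) F = 2 * s) (β : F)
    (hβ : IsPrimitiveRoot β n) : Module.finrank (ZMod 2) (BCHCode n β {1}) = n - 2 * s := by
  have : FiniteDimensional (ZMod 2) F := Module.Finite.of_finite
  have hn0 : 0 < n := by
    rcases Nat.eq_zero_or_pos n with h | h
    · have : 4 ^ 1 ≤ 4 ^ s := Nat.pow_le_pow_right (by norm_num) (by omega)
      omega
    · exact h
  let M : (Fin n → ZMod 2) →ₗ[ZMod 2] F :=
    Fintype.linearCombination (ZMod 2) (fun i : Fin n => β ^ (i : ℕ))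
  have hker : BCHCode n β {1} = LinearMap.ker M := by
    ext c
    rw [LinearMap.mem_ker]
    change (∀ j ∈ ({1} : Finset ℕ), ∑ i : Fin n, c i • β ^ (j * (i : ℕ)) = 0) ↔ _
    simp [M, Fintype.linearCombination_apply]
  have hrange : LinearMap.range M = ⊤ := by
    rw [eq_top_iff]
    have h1 : Subalgebra.toSubmodule (Algebra.adjoin (ZMod 2) {β}) ≤ LinearMap.range M := by
      rw [Algebra.adjoin_eq_span, Submodule.span_le]
      intro x hx
      rw [SetLike.mem_coe, Submonoid.mem_closure_singleton] at hx
      obtain ⟨k, rfl⟩ := hx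
      refine ⟨Pi.single ⟨k % n, Nat.mod_lt _ hn0⟩ 1, ?_⟩
      simp only [M, Fintype.linearCombination_apply_single, one_smul]
      exact (pow_mod_orderOf β k ▸ by rw [hβ.eq_orderOf])
    have h2 : Algebra.adjoin (ZMod 2) {β} = ⊤ := by
      rw [← IntermediateField.adjoin_simple_toSubalgebra_of_isAlgebraic
        (Algebra.IsAlgebraic.isAlgebraic β), adjoin_top s n hs hn hfr β hβ]
      rfl
    rw [h2] at h1
    exact h1
  have h := LinearMap.finrank_range_add_finrank_ker M
  rw [hrange, finrank_top, hfr, ← hker] at h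
  simp at h
  omega

theorem dist_part {F : Type} [Field F] [Algebra (ZMod 2) F] [Finite F] (n : ℕ) (hn0 : 0 < n)
    (hF : 16 < Nat.card F) (hcard : Nat.card F = 3 * n + 1) (β : F)
    (hβ : IsPrimitiveRoot β n) (w : F) (hw : w ^ 3 = 1) (hw1 : w ≠ 1) :
    minDist (BCHCode n β {1}) = 3 := by
  classical
  have : Fintype F := Fintype.ofFinite F
  have : CharP F 2 := charP_of_injective_algebraMap (algebraMap (ZMod 2) F).injective 2
  have h2 : (2 : F) = 0 := CharTwo.two_eq_zero
  have : NeZero n := ⟨hn0.ne'⟩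
  have hβ0 : β ≠ 0 := by
    rintro rfl
    have := hβ.pow_eq_one
    rw [zero_pow hn0.ne'] at this
    exact zero_ne_one this
  have hmem : ∀ c : Fin n → ZMod 2, c ∈ BCHCode n β {1} ↔
      ∑ i ∈ Finset.univ.filter (fun i => c i ≠ 0), β ^ (i : ℕ) = 0 := by
    intro c
    change (∀ j ∈ ({1} : Finset ℕ), ∑ i : Fin n, c i • β ^ (j * (i : ℕ)) = 0) ↔ _
    simp only [Finset.mem_singleton, forall_eq, one_mul]
    rw [Finset.sum_filter]
    have : ∀ i : Fin n, c i • β ^ (i : ℕ) = if c i ≠ 0 then β ^ (i : ℕ) else 0 := by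
      intro i
      have hz : ∀ a : ZMod 2, a = 0 ∨ a = 1 := by decide
      rcases hz (c i) with h | h <;> simp [h]
    simp only [this]
  have hinj : ∀ i j : Fin n, β ^ (i : ℕ) = β ^ (j : ℕ) → i = j := fun i j h =>
    Fin.ext (hβ.pow_inj i.2 j.2 h)
  have hcube : ∀ x : F, x ≠ 0 → ∃ i : Fin n, β ^ (i : ℕ) = x ^ 3 := by
    intro x hx
    have h1 := FiniteField.pow_card_sub_one_eq_one x hx
    rw [← Nat.card_eq_fintype_card, hcard, Nat.add_sub_cancel, pow_mul] at h1
    obtain ⟨i, hi, h⟩ := hβ.eq_pow_of_pow_eq_one h1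
    exact ⟨⟨i, hi⟩, h⟩
  have hlow : ∀ c ∈ BCHCode n β {1}, c ≠ 0 → 3 ≤ hammingNorm c := by
    intro c hc hc0
    rw [hmem] at hc
    by_contra hlt
    have hpos : hammingNorm c ≠ 0 := by rwa [Ne, hammingNorm_eq_zero]
    have hcs : hammingNorm c = 1 ∨ hammingNorm c = 2 := by omega
    unfold hammingNorm at hcs
    rcases hcs with h | h
    · obtain ⟨i, hi⟩ := Finset.card_eq_one.mp h
      rw [hi, Finset.sum_singleton] at hc
      exact pow_ne_zero _ hβ0 hc
    · obtain ⟨i, j, hij, hi⟩ := Finset.card_eq_two.mp h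
      rw [hi, Finset.sum_pair hij] at hc
      exact hij (hinj i j (by linear_combination hc - β ^ (j : ℕ) * h2))
  obtain ⟨x, y, hx, hy, hxy⟩ := exists_cubes hF w hw hw1
  obtain ⟨i, hi⟩ := hcube x hx
  obtain ⟨j, hj⟩ := hcube y hy
  have h0i : (0 : Fin n) ≠ i := by
    rintro rfl
    have hx3 : x ^ 3 = 1 := by simpa using hi.symm
    exact pow_ne_zero 3 hy (by linear_combination hxy - hx3 - h2)
  have h0j : (0 : Fin n) ≠ j := by
    rintro rfl
    have hy3 : y ^ 3 = 1 := by simpa using hj.symm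
    exact pow_ne_zero 3 hx (by linear_combination hxy - hy3 - h2)
  have hij : i ≠ j := by
    rintro rfl
    exact one_ne_zero (α := F) (by linear_combination hxy + hi - hj - y ^ 3 * h2)
  let c : Fin n → ZMod 2 := fun k => if k ∈ ({0, i, j} : Finset (Fin n)) then 1 else 0
  have hsupp : Finset.univ.filter (fun k => c k ≠ 0) = {0, i, j} := by
    ext k
    simp [c]
    tauto
  have hcn : hammingNorm c = 3 := by
    unfold hammingNorm
    rw [hsupp]
    exact Finset.card_eq_three.mpr ⟨0, i, j, h0i, h0j, hij, rfl⟩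
  have hcC : c ∈ BCHCode n β {1} := by
    rw [hmem, hsupp, Finset.sum_insert (by simp [h0i, h0j]), Finset.sum_pair hij, hi, hj,
      Fin.val_zero, pow_zero, ← add_assoc, hxy]
  have hc0 : c ≠ 0 := by
    intro h
    rw [h, hammingNorm_zero] at hcn
    omega
  apply le_antisymm
  · apply Nat.sInf_le
    exact ⟨c, hcC, hc0, hcn⟩
  · refine le_csInf ?_ ?_
    · exact ⟨3, c, hcC, hc0, hcn⟩
    rintro m ⟨d, hd, hd0, rfl⟩
    exact hlow d hd hd0

theorem stmt_14 (s : ℕ) (hs : 4 ≤ s) (n : ℕ) (hn : n = (4 ^ s - 1) / 3)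
    (α : GaloisField 2 (2 * s)) (hα : orderOf α = 2 ^ (2 * s) - 1)
    (β : GaloisField 2 (2 * s)) (hβ : β = α ^ (3)) :
    Module.finrank (ZMod 2) (BCHCode n β {1}) = n - 2 * s ∧
    minDist (BCHCode n β {1}) = 3 := by
  have h4 : 2 ^ (2 * s) = 4 ^ s := by rw [pow_mul]; norm_num
  have h256 : 4 ^ 4 ≤ 4 ^ s := Nat.pow_le_pow_right (by norm_num) hs
  have hmod : 4 ^ s % 3 = 1 := by rw [Nat.pow_mod]; simp
  have hn3 : 3 * n + 1 = 4 ^ s := by omega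
  have hn0 : 0 < n := by omega
  have hcard : Nat.card (GaloisField 2 (2 * s)) = 2 ^ (2 * s) := GaloisField.card 2 _ (by omega)
  have : Finite (GaloisField 2 (2 * s)) := Nat.finite_of_card_ne_zero (by rw [hcard]; positivity)
  have hfr : Module.finrank (ZMod 2) (GaloisField 2 (2 * s)) = 2 * s :=
    GaloisField.finrank 2 (by omega)
  have hprim : IsPrimitiveRoot α (3 * n) := by
    have := IsPrimitiveRoot.orderOf α
    rwa [hα, h4, ← hn3, Nat.add_sub_cancel] at this
  have hβn : IsPrimitiveRoot β n := by
    rw [hβ]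
    exact hprim.pow (by omega) rfl
  have hw : IsPrimitiveRoot (α ^ n) 3 := hprim.pow (by omega) (mul_comm _ _)
  exact ⟨dim_part s n hs hn3 hfr β hβn,
    dist_part n hn0 (by rw [hcard]; omega) (by rw [hcard]; omega) β hβn (α ^ n) hw.pow_eq_one
      (hw.ne_one (by norm_num))⟩
end

section
/- Let s ≥ 4 and set w1 = (2^{2s−1} + (−1)^s·2^s)/3 and w2 = (2^{2s−1} − (−1)^s·2^{s−1})/3. The dual code C_{(2,n,3,1)}^⊥, where n = (4^s−1)/3, has dimension 2s and minimum distance min{w1, w2}; moreover it contains exactly n codewords of Hamming weight w1, exactly 2n codewords of Hamming weight w2, the zero codeword, and no codewords of any other weight. -/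
open Finset

def chi (t : ZMod 2) : ℤ := if t = 0 then 1 else -1

lemma chi_add : ∀ s t : ZMod 2, chi (s + t) = chi s * chi t := by decide

section
variable {F : Type} [Field F] [Fintype F] [Algebra (ZMod 2) F]

lemma trace_sq (x : F) : Algebra.trace (ZMod 2) F (x ^ 2) = Algebra.trace (ZMod 2) F x := by
  have : CharP F 2 := charP_of_injective_algebraMap (algebraMap (ZMod 2) F).injective 2
  have : ExpChar F 2 := ExpChar.prime Nat.prime_two
  have h := Algebra.trace_eq_of_algEquiv (FiniteField.frobeniusAlgEquiv (ZMod 2) F 2) x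
  simpa [FiniteField.frobeniusAlgEquiv_apply] using h

lemma exists_trace (c : F) (hc : c ≠ 0) : ∃ x, Algebra.trace (ZMod 2) F (c * x) = 1 := by
  have : CharP F 2 := charP_of_injective_algebraMap (algebraMap (ZMod 2) F).injective 2
  obtain ⟨y, hy⟩ := Algebra.trace_surjective (ZMod 2) F 1
  exact ⟨c⁻¹ * y, by rw [mul_inv_cancel_left₀ hc, hy]⟩

lemma sum_lin [DecidableEq F] (c : F) : ∑ x : F, chi (Algebra.trace (ZMod 2) F (c * x)) =
    if c = 0 then (Fintype.card F : ℤ) else 0 := by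
  split_ifs with h
  · subst h; simp [chi]
  · obtain ⟨y, hy⟩ := exists_trace c h
    have h1 := Fintype.sum_equiv (Equiv.addRight y)
      (fun x => chi (Algebra.trace (ZMod 2) F (c * (x + y))))
      (fun x => chi (Algebra.trace (ZMod 2) F (c * x))) (fun x => rfl)
    have h2 : chi 1 = -1 := by decide
    simp only [mul_add, map_add, chi_add, hy, h2, ← Finset.sum_mul] at h1
    linarith

lemma sum_sq [DecidableEq F] (c : F) : ∑ x : F, chi (Algebra.trace (ZMod 2) F (c * x ^ 2)) =
    if c = 0 then (Fintype.card F : ℤ) else 0 := by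
  have : CharP F 2 := charP_of_injective_algebraMap (algebraMap (ZMod 2) F).injective 2
  rw [← sum_lin]
  have hb : Function.Bijective (fun x : F => x ^ 2) := by
    rw [← Finite.injective_iff_bijective]
    exact frobenius_inj F 2
  exact hb.sum_comp (fun x => chi (Algebra.trace (ZMod 2) F (c * x)))

noncomputable def SS (a : F) : ℤ := ∑ x : F, chi (Algebra.trace (ZMod 2) F (a * x ^ 3))

lemma SS_sq [DecidableEq F] (a : F) (ha : a ≠ 0) (h1 : Algebra.trace (ZMod 2) F 1 = 0) :
    SS a ^ 2 = Fintype.card F * (1 + ∑ z : F, if a * z ^ 3 = 1 then 1 else 0) := by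
  have : CharP F 2 := charP_of_injective_algebraMap (algebraMap (ZMod 2) F).injective 2
  have two : (2 : F) = 0 := CharTwo.two_eq_zero
  have e1 : SS a ^ 2 = ∑ x : F, ∑ z : F, chi (Algebra.trace (ZMod 2) F (a * z ^ 3)) *
      chi (Algebra.trace (ZMod 2) F ((a * z + a ^ 2 * z ^ 4) * x ^ 2)) := by
    rw [sq, SS, Finset.sum_mul_sum]
    refine Finset.sum_congr rfl fun x _ => ?_
    rw [← Equiv.sum_comp (Equiv.addLeft x)]
    refine Finset.sum_congr rfl fun z _ => ?_
    rw [← chi_add, ← chi_add, ← map_add, ← map_add]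
    congr 1
    have : a * x ^ 3 + a * (x + z) ^ 3 = a * z ^ 3 + a * z * x ^ 2 + a * x * z ^ 2 := by
      linear_combination (a * x ^ 3 + a * x ^ 2 * z + a * x * z ^ 2) * two
    simp only [Equiv.coe_addLeft]
    rw [this, map_add, ← trace_sq (a * x * z ^ 2), ← map_add]
    congr 1; ring
  rw [e1, Finset.sum_comm]
  simp_rw [← Finset.mul_sum, sum_sq]
  have e2 : ∀ z : F, chi (Algebra.trace (ZMod 2) F (a * z ^ 3)) *
      (if a * z + a ^ 2 * z ^ 4 = 0 then (Fintype.card F : ℤ) else 0) =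
      (if z = 0 then (Fintype.card F : ℤ) else 0) +
        Fintype.card F * (if a * z ^ 3 = 1 then 1 else 0) := by
    intro z
    by_cases hz : z = 0
    · subst hz; simp [chi]
    · have : a * z + a ^ 2 * z ^ 4 = 0 ↔ a * z ^ 3 = 1 := by
        rw [show a * z + a ^ 2 * z ^ 4 = (a * z) * (a * z ^ 3 - 1) by
          linear_combination a * z * two]
        simp [ha, hz, sub_eq_zero]
      simp only [this]
      by_cases h : a * z ^ 3 = 1
      · simp [h, hz, h1, chi]
      · simp [h, hz]
  rw [Finset.sum_congr rfl fun z _ => e2 z, Finset.sum_add_distrib, ← Finset.mul_sum]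
  simp [mul_add]

lemma sum_cube (n : ℕ) (hn : Fintype.card F = 3 * n + 1) (hn0 : 0 < n) (α : F)
    (hα : orderOf α = 3 * n) (f : F → ℤ) :
    ∑ x : F, f (x ^ 3) = f 0 + 3 * ∑ i : Fin n, f ((α ^ 3) ^ (i : ℕ)) := by
  classical
  have hα0 : α ≠ 0 := by
    rintro rfl
    have := pow_orderOf_eq_one (0 : F)
    rw [hα, zero_pow (by omega)] at this
    exact zero_ne_one this
  have hinj : Set.InjOn (fun j => α ^ j) (range (3 * n) : Finset ℕ) := by
    intro i hi j hj h
    exact pow_injOn_Iio_orderOf (by simpa [hα] using hi) (by simpa [hα] using hj) h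
  have h0 : (0 : F) ∉ (range (3 * n)).image (fun j => α ^ j) := by
    simp [hα0]
  have hu : insert (0 : F) ((range (3 * n)).image (fun j => α ^ j)) = univ := by
    apply Finset.eq_univ_of_card
    rw [card_insert_of_notMem h0, card_image_of_injOn hinj, card_range, hn]
  have h1 : (α ^ 3) ^ n = 1 := by rw [← pow_mul, ← hα, pow_orderOf_eq_one]
  rw [← hu, sum_insert h0, sum_image hinj, Fin.sum_univ_eq_sum_range (fun i => f ((α ^ 3) ^ i)) n,
    show 3 * n = n + n + n by ring, sum_range_add, sum_range_add]
  have e : ∀ j, (α ^ j) ^ 3 = (α ^ 3) ^ j := fun j => by rw [← pow_mul, ← pow_mul, mul_comm]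
  have e2 : ∀ j, (α ^ 3) ^ (n + j) = (α ^ 3) ^ j := fun j => by rw [pow_add, h1, one_mul]
  simp only [e, add_assoc, e2]
  rw [zero_pow (by norm_num)]; ring

end

section
variable {F : Type} [Field F] [Fintype F] [Algebra (ZMod 2) F]

/-- The trace parametrisation of the dual code. -/
noncomputable def TT (n : ℕ) (β : F) : F →ₗ[ZMod 2] (Fin n → ZMod 2) :=
  LinearMap.pi fun i => (Algebra.trace (ZMod 2) F).comp
    (LinearMap.mulRight (ZMod 2) (β ^ (i : ℕ)))

lemma TT_apply (n : ℕ) (β a : F) (i : Fin n) :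
    TT n β a i = Algebra.trace (ZMod 2) F (a * β ^ (i : ℕ)) := by
  simp [TT]

lemma trace_one_zero (s : ℕ) (h : Module.finrank (ZMod 2) F = 2 * s) :
    Algebra.trace (ZMod 2) F 1 = 0 := by
  have := Algebra.trace_algebraMap (S := F) (1 : ZMod 2)
  rw [map_one, h, mul_smul, two_smul] at this
  rw [this]; exact CharTwo.add_self_eq_zero _

lemma exists_rep (φ : F →ₗ[ZMod 2] ZMod 2) :
    ∃ a, ∀ x, φ x = Algebra.trace (ZMod 2) F (a * x) := by
  have hnd := traceForm_nondegenerate (ZMod 2) F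
  refine ⟨((Algebra.traceForm (ZMod 2) F).toDual hnd).symm φ, fun x => ?_⟩
  have := LinearMap.BilinForm.apply_toDual_symm_apply (B := Algebra.traceForm (ZMod 2) F)
    (hB := hnd) φ x
  rw [← this, Algebra.traceForm_apply]

lemma dual_eq (n : ℕ) (β : F) : dualCode (BCHCode n β {1}) = LinearMap.range (TT n β) := by
  apply le_antisymm
  · intro b hb
    let H : (Fin n → ZMod 2) →ₗ[ZMod 2] F :=
      Fintype.linearCombination (ZMod 2) (fun i : Fin n => β ^ (i : ℕ))
    let ψ : Module.Dual (ZMod 2) (Fin n → ZMod 2) :=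
      Fintype.linearCombination (ZMod 2) b
    have hψ : ψ ∈ (LinearMap.ker H).dualAnnihilator := by
      rw [Submodule.mem_dualAnnihilator]
      intro c hc
      have hc' : c ∈ BCHCode n β {1} := by
        intro j hj
        rw [Finset.mem_singleton] at hj
        subst hj
        simpa [H, Fintype.linearCombination_apply] using hc
      have := hb c hc'
      simpa [ψ, Fintype.linearCombination_apply, mul_comm] using this
    rw [← LinearMap.range_dualMap_eq_dualAnnihilator_ker] at hψ
    obtain ⟨φ, hφ⟩ := hψ
    obtain ⟨a, ha⟩ := exists_rep φ
    refine ⟨a, ?_⟩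
    funext i
    rw [TT_apply, ← ha]
    have := congrArg (fun f => f (Pi.single i 1)) hφ
    simpa [H, ψ, LinearMap.dualMap_apply, Fintype.linearCombination_apply_single] using this
  · rintro _ ⟨a, rfl⟩ c hc
    have h := hc 1 (by simp)
    have : ∑ i, TT n β a i * c i =
        Algebra.trace (ZMod 2) F (a * ∑ i : Fin n, c i • β ^ (1 * (i : ℕ))) := by
      rw [Finset.mul_sum, map_sum]
      refine Finset.sum_congr rfl fun i _ => ?_
      rw [TT_apply, mul_smul_comm, map_smul, smul_eq_mul, one_mul, mul_comm]
    rw [this, h]; simp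

lemma chi_sum_norm (n : ℕ) (b : Fin n → ZMod 2) :
    ∑ i, chi (b i) = n - 2 * (hammingNorm b : ℤ) := by
  have : ∀ t : ZMod 2, chi t = 1 - 2 * (if t ≠ 0 then 1 else 0) := by decide
  simp_rw [this, Finset.sum_sub_distrib, ← Finset.mul_sum]
  rw [hammingNorm, Finset.sum_boole]
  simp

lemma SS_norm (n : ℕ) (hn : Fintype.card F = 3 * n + 1) (hn0 : 0 < n) (α : F)
    (hα : orderOf α = 3 * n) (a : F) :
    SS a = 1 + 3 * (n - 2 * (hammingNorm (TT n (α ^ 3) a) : ℤ)) := by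
  rw [← chi_sum_norm, SS,
    sum_cube n hn hn0 α hα (fun y => chi (Algebra.trace (ZMod 2) F (a * y)))]
  simp [TT_apply, chi]

lemma SS_sq_cube (n : ℕ) (hn : Fintype.card F = 3 * n + 1) (hn0 : 0 < n) (α : F)
    (hα : orderOf α = 3 * n) (h1 : Algebra.trace (ZMod 2) F 1 = 0) (k : ℕ) :
    SS ((α ^ 3) ^ k) ^ 2 = 4 * Fintype.card F := by
  classical
  have hβ : orderOf (α ^ 3) = n := by
    rw [orderOf_pow_of_dvd (by norm_num) (by rw [hα]; exact dvd_mul_right _ _), hα]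
    omega
  set β := α ^ 3 with hb
  have hβ1 : β ^ n = 1 := by rw [← hβ, pow_orderOf_eq_one]
  have hβ0 : β ≠ 0 := by
    intro h
    rw [h, zero_pow (by omega)] at hβ1
    exact zero_ne_one hβ1
  rw [SS_sq _ (pow_ne_zero _ hβ0) h1,
    sum_cube n hn hn0 α hα (fun y => if β ^ k * y = 1 then 1 else 0), ← hb]
  have : ∑ i : Fin n, (if β ^ k * β ^ (i : ℕ) = 1 then (1 : ℤ) else 0) = 1 := by
    obtain ⟨i, hi, hki⟩ : ∃ i, i < n ∧ β ^ k * β ^ i = 1 := by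
      refine ⟨(n - k % n) % n, Nat.mod_lt _ hn0, ?_⟩
      conv_lhs => rw [← hβ, pow_mod_orderOf, hβ, ← pow_mod_orderOf β k, hβ]
      rw [← pow_add, Nat.add_sub_cancel' (Nat.mod_lt _ hn0).le, hβ1]
    rw [Finset.sum_eq_single (⟨i, hi⟩ : Fin n)]
    · simp [hki]
    · intro j _ hj
      rw [if_neg]
      intro h
      apply hj
      ext
      have h2 : β ^ (j : ℕ) = β ^ i := mul_left_cancel₀ (pow_ne_zero k hβ0) (h.trans hki.symm)
      exact pow_injOn_Iio_orderOf (by simp [hβ]) (by simpa [hβ] using hi) h2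
    · simp
  rw [this]; simp; ring

lemma SS_sq_noncube (α a : F) (ha : a ≠ 0) (h1 : Algebra.trace (ZMod 2) F 1 = 0)
    (hα : ∀ x : F, x ≠ 0 → ∃ k : ℕ, α ^ k = x) (hk : ∀ k : ℕ, (α ^ 3) ^ k ≠ a) :
    SS a ^ 2 = Fintype.card F := by
  classical
  rw [SS_sq _ ha h1, Finset.sum_eq_zero]
  · simp
  · intro z _
    rw [if_neg]
    intro h
    have hz : z ≠ 0 := by rintro rfl; simp at h
    obtain ⟨k, hk'⟩ := hα z⁻¹ (inv_ne_zero hz)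
    apply hk k
    rw [← pow_mul, mul_comm, pow_mul, hk', inv_pow]
    exact (eq_inv_of_mul_eq_one_left h).symm

lemma exists_pow (n : ℕ) (hn : Fintype.card F = 3 * n + 1) (hn0 : 0 < n) (α : F)
    (hα : orderOf α = 3 * n) (x : F) (hx : x ≠ 0) : ∃ k : ℕ, α ^ k = x := by
  classical
  have hα0 : α ≠ 0 := by
    rintro rfl
    have := pow_orderOf_eq_one (0 : F)
    rw [hα, zero_pow (by omega)] at this
    exact zero_ne_one this
  have hinj : Set.InjOn (fun j => α ^ j) (range (3 * n) : Finset ℕ) := by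
    intro i hi j hj h
    exact pow_injOn_Iio_orderOf (by simpa [hα] using hi) (by simpa [hα] using hj) h
  have h0 : (0 : F) ∉ (range (3 * n)).image (fun j => α ^ j) := by
    simp [hα0]
  have hu : insert (0 : F) ((range (3 * n)).image (fun j => α ^ j)) = univ := by
    apply Finset.eq_univ_of_card
    rw [card_insert_of_notMem h0, card_image_of_injOn hinj, card_range, hn]
  have := Finset.mem_univ x
  rw [← hu] at this
  simp only [mem_insert, hx, false_or, mem_image] at this
  obtain ⟨k, _, h⟩ := this
  exact ⟨k, h⟩

end

lemma sign_of_sq (k : ℕ) (S m : ℤ) (h : S ^ 2 = (2 ^ k) ^ 2) (hm : S = 1 + 3 * m) :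
    S = (-1) ^ k * 2 ^ k := by
  have h3 : ∃ t : ℤ, (-1) ^ k * 2 ^ k = 1 + 3 * t := by
    rw [← mul_pow]
    induction k with
    | zero => exact ⟨0, by simp⟩
    | succ k ih =>
      clear h
      have : ∀ k : ℕ, ∃ t : ℤ, (-1 * 2) ^ k = 1 + 3 * t := by
        intro k
        induction k with
        | zero => exact ⟨0, by simp⟩
        | succ k ih =>
          obtain ⟨t, ht⟩ := ih
          exact ⟨-1 - 2 * t, by rw [pow_succ, ht]; ring⟩
      exact this _
  obtain ⟨t, ht⟩ := h3
  rcases sq_eq_sq_iff_eq_or_eq_neg.1 h with h | h <;>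
    rcases neg_one_pow_eq_or ℤ k with h' | h' <;> rw [h'] at ht ⊢ <;> omega

theorem stmt_15 (s : ℕ) (hs : 4 ≤ s) (n : ℕ) (hn : n = (4 ^ s - 1) / 3)
    (α : GaloisField 2 (2 * s)) (hα : orderOf α = 2 ^ (2 * s) - 1)
    (β : GaloisField 2 (2 * s)) (hβ : β = α ^ (3)) (w1 w2 : ℕ)
    (hw1 : (3 * w1 : ℤ) = 2 ^ (2 * s - 1) + (-1) ^ s * 2 ^ s)
    (hw2 : (3 * w2 : ℤ) = 2 ^ (2 * s - 1) - (-1) ^ s * 2 ^ (s - 1))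
    (D : Submodule (ZMod 2) (Fin n → ZMod 2)) (hD : D = dualCode (BCHCode n β {1})) :
    Module.finrank (ZMod 2) D = 2 * s ∧
    minDist D = min w1 w2 ∧
    weightCount D w1 = n ∧
    weightCount D w2 = 2 * n ∧
    weightCount D 0 = 1 ∧
    ∀ w : ℕ, w ≠ 0 → w ≠ w1 → w ≠ w2 → weightCount D w = 0 := by
  subst hD hβ
  have : Fintype (GaloisField 2 (2 * s)) := Fintype.ofFinite _
  have hcard : Fintype.card (GaloisField 2 (2 * s)) = 2 ^ (2 * s) := by
    rw [← Nat.card_eq_fintype_card, GaloisField.card 2 _ (by omega)]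
  have h4 : (4 : ℕ) ^ s = 2 ^ (2 * s) := by rw [pow_mul]; norm_num
  have h43 : 4 ^ s = 3 * n + 1 := by
    have h : (4 : ℕ) ^ s % 3 = 1 := by rw [Nat.pow_mod]; simp
    omega
  have hq : Fintype.card (GaloisField 2 (2 * s)) = 3 * n + 1 := by omega
  have hn0 : 0 < n := by
    have : 4 ^ 1 ≤ 4 ^ s := Nat.pow_le_pow_right (by norm_num) (by omega)
    omega
  have ho : orderOf α = 3 * n := by omega
  have hfr : Module.finrank (ZMod 2) (GaloisField 2 (2 * s)) = 2 * s :=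
    GaloisField.finrank 2 (by omega)
  have h1 : Algebra.trace (ZMod 2) (GaloisField 2 (2 * s)) 1 = 0 := by
    exact trace_one_zero s hfr
  have hqz : (Fintype.card (GaloisField 2 (2 * s)) : ℤ) = (2 ^ s) ^ 2 := by
    rw [hcard]; push_cast; ring
  have hqn : (3 * n + 1 : ℤ) = (2 ^ s) ^ 2 := by rw [← hqz, hq]; push_cast; ring
  -- rewrite the weights
  obtain ⟨r, rfl⟩ : ∃ r, s = r + 1 := ⟨s - 1, by omega⟩
  have hp : (16 : ℤ) ≤ 2 ^ (r + 1) := by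
    calc (16 : ℤ) = 2 ^ 4 := by norm_num
      _ ≤ _ := pow_le_pow_right₀ (by norm_num) hs
  have hw1' : (6 * w1 : ℤ) = (2 ^ (r + 1)) ^ 2 - (-1) ^ (r + 2) * 2 ^ (r + 2) := by
    rw [show 2 * (r + 1) - 1 = 2 * r + 1 by omega] at hw1
    linear_combination 2 * hw1
  have hw2' : (6 * w2 : ℤ) = (2 ^ (r + 1)) ^ 2 - (-1) ^ (r + 1) * 2 ^ (r + 1) := by
    rw [show 2 * (r + 1) - 1 = 2 * r + 1 by omega, show r + 1 - 1 = r by omega] at hw2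
    linear_combination 2 * hw2
  have wcube : ∀ k : ℕ, hammingNorm (TT n (α ^ 3) ((α ^ 3) ^ k)) = w1 := by
    intro k
    have e := SS_norm n hq hn0 α ho ((α ^ 3) ^ k)
    have e2 := sign_of_sq (r + 2) _ _
      (by rw [SS_sq_cube n hq hn0 α ho h1 k, hqz]; ring) e
    rw [e2] at e
    zify
    linarith
  have wnon : ∀ a, a ≠ 0 → (∀ k : ℕ, (α ^ 3) ^ k ≠ a) → hammingNorm (TT n (α ^ 3) a) = w2 := by
    intro a ha hk
    have e := SS_norm n hq hn0 α ho a
    have e2 := sign_of_sq (r + 1) _ _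
      (by rw [SS_sq_noncube α a ha h1 (exists_pow n hq hn0 α ho) hk, hqz]) e
    rw [e2] at e
    zify
    linarith
  have hpe : (2 : ℤ) ^ (r + 2) = 2 * 2 ^ (r + 1) := by ring
  have hw1p : 0 < w1 := by
    zify
    rcases neg_one_pow_eq_or ℤ (r + 2) with h | h <;> rw [h, hpe] at hw1' <;> nlinarith
  have hw2p : 0 < w2 := by
    zify
    rcases neg_one_pow_eq_or ℤ (r + 1) with h | h <;> rw [h] at hw2' <;> nlinarith
  have hne : w1 ≠ w2 := by
    intro h
    rw [← h, hw1', hpe, pow_succ (-1 : ℤ) (r + 1)] at hw2'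
    rcases neg_one_pow_eq_or ℤ (r + 1) with h | h <;> rw [h] at hw2' <;> linarith
  set β := α ^ 3 with hβdef
  have hβ : orderOf β = n := by
    rw [hβdef, orderOf_pow_of_dvd (by norm_num) (by rw [ho]; exact dvd_mul_right _ _), ho]
    omega
  have hβ1 : β ^ n = 1 := by rw [← hβ, pow_orderOf_eq_one]
  have hβ0 : β ≠ 0 := by
    intro h
    rw [h, zero_pow (by omega)] at hβ1
    exact zero_ne_one hβ1
  have wcases : ∀ a, a ≠ 0 →
      (a ∈ Set.range (fun k : ℕ => β ^ k) ∧ hammingNorm (TT n β a) = w1) ∨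
      (a ∉ Set.range (fun k : ℕ => β ^ k) ∧ hammingNorm (TT n β a) = w2) := by
    intro a ha
    by_cases h : a ∈ Set.range (fun k : ℕ => β ^ k)
    · refine Or.inl ⟨h, ?_⟩
      obtain ⟨k, rfl⟩ := h
      exact wcube k
    · exact Or.inr ⟨h, wnon a ha fun k hk => h ⟨k, hk⟩⟩
  have hinj : Function.Injective (TT n β) := by
    rw [injective_iff_map_eq_zero]
    intro a ha
    by_contra h
    rcases wcases a h with h | h <;> rw [ha, hammingNorm_zero] at h <;> omega
  have hcount : ∀ w, weightCount (dualCode (BCHCode n β {1})) w =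
      Set.ncard {a | hammingNorm (TT n β a) = w} := by
    intro w
    rw [weightCount, dual_eq, ← Set.ncard_image_of_injective _ hinj]
    congr 1
    ext c
    constructor
    · rintro ⟨⟨a, rfl⟩, h⟩; exact ⟨a, h, rfl⟩
    · rintro ⟨a, h, rfl⟩; exact ⟨⟨a, rfl⟩, h⟩
  have hset1 : {a | hammingNorm (TT n β a) = w1} = Set.range (fun k : ℕ => β ^ k) := by
    ext a
    constructor
    · intro h
      have h : hammingNorm (TT n β a) = w1 := h
      by_cases ha : a = 0
      · rw [ha, map_zero, hammingNorm_zero] at h; omega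
      · rcases wcases a ha with h' | h'
        · exact h'.1
        · omega
    · rintro ⟨k, rfl⟩; exact wcube k
  have hset2 : {a | hammingNorm (TT n β a) = w2} =
      (insert 0 (Set.range (fun k : ℕ => β ^ k)))ᶜ := by
    ext a
    rw [Set.mem_compl_iff, Set.mem_insert_iff, not_or]
    constructor
    · intro h
      have h : hammingNorm (TT n β a) = w2 := h
      by_cases ha : a = 0
      · rw [ha, map_zero, hammingNorm_zero] at h; omega
      · rcases wcases a ha with h' | h'
        · omega
        · exact ⟨ha, h'.1⟩
    · rintro ⟨h0, h⟩
      rcases wcases a h0 with h' | h'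
      · exact absurd h'.1 h
      · exact h'.2
  have hcard1 : (Set.range (fun k : ℕ => β ^ k)).ncard = n := by
    have : Set.range (fun k : ℕ => β ^ k) = (fun k : ℕ => β ^ k) '' Set.Iio n := by
      ext a
      constructor
      · rintro ⟨k, rfl⟩
        refine ⟨k % n, Nat.mod_lt _ hn0, ?_⟩
        simp only
        conv_lhs => rw [← hβ, pow_mod_orderOf]
      · rintro ⟨k, _, rfl⟩; exact ⟨k, rfl⟩
    rw [this, Set.ncard_image_of_injOn]
    · rw [← Finset.coe_Iio, Set.ncard_coe_finset]; simp
    · have := pow_injOn_Iio_orderOf (x := β)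
      rwa [hβ] at this
  have hc1 : weightCount (dualCode (BCHCode n β {1})) w1 = n := by
    rw [hcount, hset1, hcard1]
  have hc2 : weightCount (dualCode (BCHCode n β {1})) w2 = 2 * n := by
    rw [hcount, hset2, Set.ncard_compl, Set.ncard_insert_of_notMem, hcard1,
      Nat.card_eq_fintype_card, hq]
    · omega
    · rintro ⟨k, hk⟩
      exact pow_ne_zero k hβ0 hk
  refine ⟨?_, ?_, hc1, hc2, ?_, ?_⟩
  · rw [dual_eq, LinearMap.finrank_range_of_inj hinj, hfr]
  · have hs1 : ∀ w, 0 < w → 0 < weightCount (dualCode (BCHCode n β {1})) w →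
        w ∈ {w | ∃ c ∈ dualCode (BCHCode n β {1}), c ≠ 0 ∧ hammingNorm c = w} := by
      intro w hw h
      obtain ⟨c, hc, hcw⟩ := Set.nonempty_of_ncard_ne_zero h.ne'
      refine ⟨c, hc, ?_, hcw⟩
      rintro rfl
      rw [hammingNorm_zero] at hcw; omega
    apply le_antisymm
    · exact le_min (Nat.sInf_le (hs1 w1 hw1p (by omega))) (Nat.sInf_le (hs1 w2 hw2p (by omega)))
    · apply le_csInf ⟨w1, hs1 w1 hw1p (by omega)⟩
      rintro w ⟨c, hc, hc0, rfl⟩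
      rw [dual_eq] at hc
      obtain ⟨a, rfl⟩ := hc
      have ha : a ≠ 0 := by rintro rfl; simp at hc0
      rcases wcases a ha with h | h <;> rw [h.2]
      · exact min_le_left _ _
      · exact min_le_right _ _
  · rw [hcount]
    have : {a | hammingNorm (TT n β a) = 0} = {0} := by
      ext a
      simp [hammingNorm_eq_zero, map_eq_zero_iff _ hinj]
    rw [this, Set.ncard_singleton]
  · intro w h0 hw1 hw2
    rw [hcount]
    rw [Set.ncard_eq_zero, Set.eq_empty_iff_forall_notMem]
    intro a h
    have h : hammingNorm (TT n β a) = w := h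
    by_cases ha : a = 0
    · rw [ha, map_zero, hammingNorm_zero] at h; omega
    · rcases wcases a ha with h' | h' <;> omega
end
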